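/- arXiv:2512.14497 — 10 statements merged into one kernel-verified Lean document; each statement's English description precedes it below -/
import Mathlib

section
/- Let ρ and H be N×N Hermitian complex matrices. Then the infimum, over all N×N unitary matrices V, of the (necessarily real) quantity Tr(V ρ V* H) equals ∑_{i=1}^N λ_i^↓ ε_i^↑, where λ_1^↓ ≥ … ≥ λ_N^↓ are the eigenvalues of ρ listed with multiplicity in nonincreasing order and ε_1^↑ ≤ … ≤ ε_N^↑ are the eigenvalues of H listed with multiplicity in nondecreasing order; moreover this infimum is attained by some unitary V. -/
open scoped BigOperators ComplexOrder
open Matrix Kronecker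

/-- Nondecreasing rearrangement of a finite real-valued family. -/
noncomputable def sortUp {ι : Type*} [Fintype ι] (f : ι → ℝ) : Fin (Fintype.card ι) → ℝ :=
  (f ∘ (Fintype.equivFin ι).symm) ∘ Tuple.sort (f ∘ (Fintype.equivFin ι).symm)

/-- Nonincreasing rearrangement of a finite real-valued family. -/
noncomputable def sortDown {ι : Type*} [Fintype ι] (f : ι → ℝ) : Fin (Fintype.card ι) → ℝ :=
  fun i => sortUp f i.rev

/-- Ergotropy ξ(ρ,H) = Tr(ρH) − inf over unitaries V of Tr(V ρ V* H). -/
noncomputable def ergotropy {ι : Type*} [Fintype ι] [DecidableEq ι] (ρ H : Matrix ι ι ℂ) : ℝ :=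
  ((ρ * H).trace).re -
    ⨅ V : Matrix.unitaryGroup ι ℂ,
      (((V : Matrix ι ι ℂ) * ρ * star (V : Matrix ι ι ℂ) * H).trace).re

/-- Passive energy E_p(ρ,H) = ∑ λ_i^↓ ε_i^↑. -/
noncomputable def passiveEnergy {ι : Type*} [Fintype ι] [DecidableEq ι]
    {ρ H : Matrix ι ι ℂ} (hρ : ρ.IsHermitian) (hH : H.IsHermitian) : ℝ :=
  ∑ i, sortDown hρ.eigenvalues i * sortUp hH.eigenvalues i

/-- |u⟩⟨u|, the matrix with entries u_i conj(u_j). -/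
noncomputable def ketbra {ι : Type*} (u : ι → ℂ) : Matrix ι ι ℂ := Matrix.vecMulVec u (star u)

/-- Tensor (Kronecker) product of vectors: (u ⊗ v)_(i,j) = u_i v_j. -/
noncomputable def vecTensor {ιa ιb : Type*} (u : ιa → ℂ) (v : ιb → ℂ) : ιa × ιb → ℂ :=
  fun p => u p.1 * v p.2

/-- The local measurement channel Π(ρ) = ∑_k (P_k ⊗ I) ρ (P_k ⊗ I). -/
noncomputable def pinch {ιa ιb K : Type*} [Fintype ιa] [Fintype ιb] [Fintype K]
    [DecidableEq ιa] [DecidableEq ιb]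
    (P : K → Matrix ιa ιa ℂ) (ρ : Matrix (ιa × ιb) (ιa × ιb) ℂ) :
    Matrix (ιa × ιb) (ιa × ιb) ℂ :=
  ∑ k, (P k ⊗ₖ (1 : Matrix ιb ιb ℂ)) * ρ * (P k ⊗ₖ (1 : Matrix ιb ιb ℂ))

/-- Local ergotropy ξ^l(ρ,H) = Tr(ρH) − inf over local unitaries U⊗V of Tr((U⊗V) ρ (U⊗V)* H). -/
noncomputable def localErgotropy {n m : ℕ}
    (ρ H : Matrix (Fin n × Fin m) (Fin n × Fin m) ℂ) : ℝ :=
  ((ρ * H).trace).re -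
    ⨅ W : Matrix.unitaryGroup (Fin n) ℂ × Matrix.unitaryGroup (Fin m) ℂ,
      ((((W.1 : Matrix (Fin n) (Fin n) ℂ) ⊗ₖ (W.2 : Matrix (Fin m) (Fin m) ℂ)) * ρ *
        star ((W.1 : Matrix (Fin n) (Fin n) ℂ) ⊗ₖ (W.2 : Matrix (Fin m) (Fin m) ℂ)) * H).trace).re

/-- First marginal (partial trace over the second factor). -/
noncomputable def marginalA {n m : ℕ} (ρ : Matrix (Fin n × Fin m) (Fin n × Fin m) ℂ) :
    Matrix (Fin n) (Fin n) ℂ :=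
  Matrix.of fun i i' => ∑ j, ρ (i, j) (i', j)

/-- Second marginal (partial trace over the first factor). -/
noncomputable def marginalB {n m : ℕ} (ρ : Matrix (Fin n × Fin m) (Fin n × Fin m) ℂ) :
    Matrix (Fin m) (Fin m) ℂ :=
  Matrix.of fun j j' => ∑ i, ρ (i, j) (i, j')

theorem aux_trace {ι : Type*} [Fintype ι] [DecidableEq ι] (U : Matrix ι ι ℂ) (a b : ι → ℝ) :
    ((U * diagonal (fun i => (a i : ℂ)) * star U * diagonal (fun i => (b i : ℂ))).trace).re
      = ∑ i, ∑ j, Complex.normSq (U i j) * (a j * b i) := by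
  simp only [Matrix.trace, Matrix.diag, Matrix.mul_diagonal]
  rw [Complex.re_sum]
  refine Finset.sum_congr rfl fun i _ => ?_
  rw [Matrix.mul_apply, Finset.sum_mul, Complex.re_sum]
  refine Finset.sum_congr rfl fun j _ => ?_
  rw [Matrix.mul_diagonal, Matrix.star_apply]
  have : U i j * (a j : ℂ) * star (U i j) * (b i : ℂ)
      = ((Complex.normSq (U i j) * (a j * b i) : ℝ) : ℂ) := by
    push_cast
    rw [← Complex.mul_conj, starRingEnd_apply]
    ring
  rw [this, Complex.ofReal_re]

theorem aux_lower {ι : Type*} [Fintype ι] [DecidableEq ι] (a b : ι → ℝ) (c : ℝ)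
    (hc : ∀ p : Equiv.Perm ι, c ≤ ∑ i, a (p i) * b i) (M : Matrix ι ι ℝ)
    (hM : M ∈ doublyStochastic ℝ ι) : c ≤ ∑ i, ∑ j, M i j * (a j * b i) := by
  obtain ⟨w, hw0, hw1, rfl⟩ := exists_eq_sum_perm_of_mem_doublyStochastic hM
  have : ∑ i, ∑ j, (∑ σ, w σ • σ.permMatrix ℝ) i j * (a j * b i)
      = ∑ σ : Equiv.Perm ι, w σ * ∑ i, a (σ i) * b i := by
    simp only [Matrix.sum_apply, Matrix.smul_apply, Finset.sum_mul, Finset.mul_sum]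
    simp_rw [Finset.sum_comm (s := Finset.univ (α := ι)) (t := Finset.univ (α := Equiv.Perm ι))]
    refine Finset.sum_congr rfl fun σ _ => Finset.sum_congr rfl fun i _ => ?_
    simp [Equiv.Perm.permMatrix, PEquiv.toMatrix_apply]
  rw [this]
  calc c = ∑ σ, w σ * c := by rw [← Finset.sum_mul, hw1, one_mul]
    _ ≤ _ := Finset.sum_le_sum fun σ _ => mul_le_mul_of_nonneg_left (hc σ) (hw0 σ)

theorem aux_ds {ι : Type*} [Fintype ι] [DecidableEq ι] (U : Matrix.unitaryGroup ι ℂ) :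
    (Matrix.of fun i j => Complex.normSq ((U : Matrix ι ι ℂ) i j)) ∈ doublyStochastic ℝ ι := by
  rw [mem_doublyStochastic_iff_sum]
  refine ⟨fun i j => Complex.normSq_nonneg _, fun i => ?_, fun j => ?_⟩
  · have h := congrFun (congrFun (Matrix.mem_unitaryGroup_iff.1 U.2) i) i
    rw [Matrix.mul_apply, Matrix.one_apply_eq] at h
    have : ((∑ j, Complex.normSq ((U : Matrix ι ι ℂ) i j) : ℝ) : ℂ) = 1 := by
      rw [← h]; push_cast
      exact Finset.sum_congr rfl fun j _ => by
        rw [← Complex.mul_conj, starRingEnd_apply, Matrix.star_apply]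
    exact_mod_cast this
  · have h := congrFun (congrFun (Matrix.mem_unitaryGroup_iff'.1 U.2) j) j
    rw [Matrix.mul_apply, Matrix.one_apply_eq] at h
    have : ((∑ i, Complex.normSq ((U : Matrix ι ι ℂ) i j) : ℝ) : ℂ) = 1 := by
      rw [← h]; push_cast
      exact Finset.sum_congr rfl fun j _ => by
        rw [← Complex.mul_conj, starRingEnd_apply, Matrix.star_apply, mul_comm]
    exact_mod_cast this

theorem aux_perm {ι : Type*} [Fintype ι] [DecidableEq ι] (p : Equiv.Perm ι) :
    p.permMatrix ℂ ∈ Matrix.unitaryGroup ι ℂ := by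
  rw [Matrix.mem_unitaryGroup_iff, Matrix.star_eq_conjTranspose, Matrix.conjTranspose_permMatrix,
    ← Matrix.permMatrix_mul]
  simp

theorem aux_sort {ι : Type*} [Fintype ι] (a b : ι → ℝ) :
    ∃ p : Equiv.Perm ι, (∑ i, sortDown a i * sortUp b i = ∑ i, a (p i) * b i) ∧
      ∀ q : Equiv.Perm ι, ∑ i, sortDown a i * sortUp b i ≤ ∑ i, a (q i) * b i := by
  have hmono : ∀ f : ι → ℝ, Monotone (sortUp f) := fun f => Tuple.monotone_sort _
  have hanti : Antitone (sortDown a) := fun i j h => hmono a (Fin.rev_le_rev.2 h)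
  obtain ⟨σ, hσ⟩ : ∃ σ : Fin (Fintype.card ι) ≃ ι, sortDown a = a ∘ σ :=
    ⟨Fin.revPerm.trans ((Tuple.sort (a ∘ (Fintype.equivFin ι).symm)).trans
      (Fintype.equivFin ι).symm), rfl⟩
  obtain ⟨τ, hτ⟩ : ∃ τ : Fin (Fintype.card ι) ≃ ι, sortUp b = b ∘ τ :=
    ⟨(Tuple.sort (b ∘ (Fintype.equivFin ι).symm)).trans (Fintype.equivFin ι).symm, rfl⟩
  refine ⟨τ.symm.trans σ, ?_, fun q => ?_⟩
  · rw [← Equiv.sum_comp τ]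
    simp [hσ, hτ]
  · have hav : Antivary (sortDown a) (sortUp b) := hanti.antivary (hmono b)
    have := hav.sum_smul_le_sum_comp_perm_smul (σ := (τ.trans q).trans σ.symm)
    refine this.trans (le_of_eq ?_)
    rw [← Equiv.sum_comp τ (fun i => a (q i) * b i)]
    simp [hσ, hτ]

theorem aux_spec {ι : Type*} [Fintype ι] [DecidableEq ι] {A : Matrix ι ι ℂ} (hA : A.IsHermitian) :
    A = (hA.eigenvectorUnitary : Matrix ι ι ℂ) * diagonal (fun i => (hA.eigenvalues i : ℂ)) *
      star (hA.eigenvectorUnitary : Matrix ι ι ℂ) := by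
  have h := hA.spectral_theorem
  rw [Unitary.conjStarAlgAut_apply] at h
  exact h

theorem aux_key {ι : Type*} [Fintype ι] [DecidableEq ι] {ρ H : Matrix ι ι ℂ}
    (hρ : ρ.IsHermitian) (hH : H.IsHermitian) (V : Matrix ι ι ℂ) :
    (V * ρ * star V * H).trace =
      ((star (hH.eigenvectorUnitary : Matrix ι ι ℂ) * V * hρ.eigenvectorUnitary) *
        diagonal (fun i => (hρ.eigenvalues i : ℂ)) *
        star (star (hH.eigenvectorUnitary : Matrix ι ι ℂ) * V * hρ.eigenvectorUnitary) *
        diagonal (fun i => (hH.eigenvalues i : ℂ))).trace := by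
  conv_lhs => rw [aux_spec hρ, aux_spec hH]
  rw [← mul_assoc, Matrix.trace_mul_comm]
  simp only [star_mul, star_star, mul_assoc]

/-- the infimum over unitaries V of Tr(VρV*H) equals ∑ λ_i^↓ ε_i^↑,
and is attained by some unitary. -/
theorem inf_unitary_trace_eq_passiveEnergy {ι : Type*} [Fintype ι] [DecidableEq ι]
    {ρ H : Matrix ι ι ℂ} (hρ : ρ.IsHermitian) (hH : H.IsHermitian) :
    IsLeast
      { x : ℝ | ∃ V : Matrix.unitaryGroup ι ℂ,
          x = (((V : Matrix ι ι ℂ) * ρ * star (V : Matrix ι ι ℂ) * H).trace).re }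
      (∑ i, sortDown hρ.eigenvalues i * sortUp hH.eigenvalues i) := by
  obtain ⟨p, hp, hmin⟩ := aux_sort hρ.eigenvalues hH.eigenvalues
  constructor
  · refine ⟨hH.eigenvectorUnitary * ⟨p.permMatrix ℂ, aux_perm p⟩ * star hρ.eigenvectorUnitary, ?_⟩
    rw [aux_key hρ hH]
    have : star (hH.eigenvectorUnitary : Matrix ι ι ℂ) *
        ((hH.eigenvectorUnitary * ⟨p.permMatrix ℂ, aux_perm p⟩ * star hρ.eigenvectorUnitary :
          Matrix.unitaryGroup ι ℂ) : Matrix ι ι ℂ) * hρ.eigenvectorUnitary = p.permMatrix ℂ := by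
      have h : star hH.eigenvectorUnitary *
        (hH.eigenvectorUnitary * ⟨p.permMatrix ℂ, aux_perm p⟩ * star hρ.eigenvectorUnitary) *
          hρ.eigenvectorUnitary = (⟨p.permMatrix ℂ, aux_perm p⟩ : Matrix.unitaryGroup ι ℂ) := by
        simp only [mul_assoc, Unitary.star_mul_self, mul_one]
        rw [← mul_assoc, Unitary.star_mul_self, one_mul]
      exact congrArg Subtype.val h
    rw [this, aux_trace, hp]
    refine Finset.sum_congr rfl fun i _ => ?_
    rw [Finset.sum_eq_single (p i)]
    · simp [Equiv.Perm.permMatrix, PEquiv.toMatrix_apply]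
    · intro j _ hj
      simp [Equiv.Perm.permMatrix, PEquiv.toMatrix_apply, hj.symm]
    · simp
  · rintro x ⟨V, rfl⟩
    rw [aux_key hρ hH, aux_trace]
    exact aux_lower _ _ _ hmin _
      (aux_ds (star hH.eigenvectorUnitary * V * hρ.eigenvectorUnitary))
end

section
/- Let n, m be finite dimensions, let (P_k) be a finite family of n×n orthogonal projection matrices (P_k* = P_k = P_k²) that are pairwise orthogonal and sum to I_n, and let Π(ρ) := ∑_k (P_k ⊗ I_m) ρ (P_k ⊗ I_m) be the associated measurement channel on nm×nm matrices. Let H be an nm×nm Hermitian matrix, ρ an nm×nm density matrix, and U := I_n ⊗ U_b with U_b an m×m unitary, such that U H = H U. Then ξ(U ρ U*, H) − ξ(Π(U ρ U*), H) = ξ(ρ, H) − ξ(Π(ρ), H), i.e., the ergotropy-based measurement-induced nonlocality N_ξ is invariant under such restricted local unitaries. -/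
open scoped BigOperators ComplexOrder
open Matrix Kronecker

/-- Ergotropy is invariant under unitaries commuting with the Hamiltonian. -/
theorem ergotropy_conj_of_commute {ι : Type*} [Fintype ι] [DecidableEq ι]
    (U : Matrix.unitaryGroup ι ℂ) (ρ H : Matrix ι ι ℂ)
    (hUH : (U : Matrix ι ι ℂ) * H = H * (U : Matrix ι ι ℂ)) :
    ergotropy ((U : Matrix ι ι ℂ) * ρ * star (U : Matrix ι ι ℂ)) H = ergotropy ρ H := by
  have hUU : star (U : Matrix ι ι ℂ) * (U : Matrix ι ι ℂ) = 1 :=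
    Matrix.UnitaryGroup.star_mul_self U
  unfold ergotropy
  have htr : ((U : Matrix ι ι ℂ) * ρ * star (U : Matrix ι ι ℂ) * H).trace = (ρ * H).trace := by
    rw [Matrix.mul_assoc, Matrix.mul_assoc, Matrix.trace_mul_comm]
    rw [Matrix.mul_assoc, Matrix.mul_assoc, ← hUH, ← Matrix.mul_assoc (star _), hUU,
      Matrix.one_mul]
  rw [htr]
  refine congrArg (fun x : ℝ => ((ρ * H).trace).re - x) ?_
  refine (Equiv.mulRight U).iInf_congr fun V => ?_
  simp only [Equiv.coe_mulRight, Matrix.UnitaryGroup.mul_val, star_mul, Matrix.mul_assoc]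

/-- The channel commutes with conjugation by `1 ⊗ U_b`. -/
theorem pinch_conj {n m : ℕ} {K : Type*} [Fintype K] (P : K → Matrix (Fin n) (Fin n) ℂ)
    (ρ : Matrix (Fin n × Fin m) (Fin n × Fin m) ℂ) (B : Matrix (Fin m) (Fin m) ℂ) :
    pinch P (((1 : Matrix (Fin n) (Fin n) ℂ) ⊗ₖ B) * ρ *
        star ((1 : Matrix (Fin n) (Fin n) ℂ) ⊗ₖ B)) =
      ((1 : Matrix (Fin n) (Fin n) ℂ) ⊗ₖ B) * pinch P ρ *
        star ((1 : Matrix (Fin n) (Fin n) ℂ) ⊗ₖ B) := by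
  have hcomm : ∀ (A : Matrix (Fin n) (Fin n) ℂ) (C : Matrix (Fin m) (Fin m) ℂ),
      (A ⊗ₖ (1 : Matrix (Fin m) (Fin m) ℂ)) * ((1 : Matrix (Fin n) (Fin n) ℂ) ⊗ₖ C) =
      ((1 : Matrix (Fin n) (Fin n) ℂ) ⊗ₖ C) * (A ⊗ₖ (1 : Matrix (Fin m) (Fin m) ℂ)) := by
    intro A C
    rw [← Matrix.mul_kronecker_mul, ← Matrix.mul_kronecker_mul]
    simp
  have hstar : star ((1 : Matrix (Fin n) (Fin n) ℂ) ⊗ₖ B) =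
      (1 : Matrix (Fin n) (Fin n) ℂ) ⊗ₖ Bᴴ := by
    rw [Matrix.star_eq_conjTranspose, Matrix.conjTranspose_kronecker, Matrix.conjTranspose_one]
  unfold pinch
  rw [hstar, Matrix.mul_sum, Matrix.sum_mul]
  refine Finset.sum_congr rfl fun k _ => ?_
  simp only [Matrix.mul_assoc]
  rw [← hcomm (P k) Bᴴ, ← Matrix.mul_assoc (P k ⊗ₖ 1), hcomm (P k) B, Matrix.mul_assoc]

/-- Theorem 1 of the paper: EMIN is invariant under restricted local
unitaries U = I ⊗ U_b commuting with the Hamiltonian. -/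
theorem emin_restricted_local_unitary_invariance {n m : ℕ} {K : Type*} [Fintype K]
    (P : K → Matrix (Fin n) (Fin n) ℂ)
    (hPherm : ∀ k, (P k)ᴴ = P k) (hPidem : ∀ k, P k * P k = P k)
    (hPorth : ∀ k l, k ≠ l → P k * P l = 0)
    (hPsum : ∑ k, P k = (1 : Matrix (Fin n) (Fin n) ℂ))
    {H ρ : Matrix (Fin n × Fin m) (Fin n × Fin m) ℂ}
    (hH : H.IsHermitian) (hρ : ρ.PosSemidef) (hρtr : ρ.trace = 1)
    (Ub : Matrix.unitaryGroup (Fin m) ℂ)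
    (U : Matrix (Fin n × Fin m) (Fin n × Fin m) ℂ)
    (hU : U = (1 : Matrix (Fin n) (Fin n) ℂ) ⊗ₖ (Ub : Matrix (Fin m) (Fin m) ℂ))
    (hUH : U * H = H * U) :
    ergotropy (U * ρ * star U) H - ergotropy (pinch P (U * ρ * star U)) H
      = ergotropy ρ H - ergotropy (pinch P ρ) H := by
  have hmem : U ∈ Matrix.unitaryGroup (Fin n × Fin m) ℂ := by
    rw [hU]
    exact Matrix.kronecker_mem_unitary (one_mem _) Ub.2
  have h1 := ergotropy_conj_of_commute ⟨U, hmem⟩ ρ H hUH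
  have h2 := ergotropy_conj_of_commute ⟨U, hmem⟩ (pinch P ρ) H hUH
  have h3 : pinch P (U * ρ * star U) = U * pinch P ρ * star U := by
    rw [hU]
    exact pinch_conj P ρ _
  rw [h3]
  exact congrArg₂ (· - ·) h1 h2
end

section
/- Let H be an N×N Hermitian complex matrix and ψ ∈ ℂ^N a unit vector. Then ξ(|ψ⟩⟨ψ|, H) = ⟨ψ, Hψ⟩ − ε_min, where |ψ⟩⟨ψ| is the rank-one orthogonal projection onto ψ and ε_min is the smallest eigenvalue of H. -/
open scoped BigOperators ComplexOrder
open Matrix Kronecker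

/-- Energy of the rotated pure state. -/
lemma energy_aux {ι : Type*} [Fintype ι] [DecidableEq ι]
    (A H : Matrix ι ι ℂ) (ψ : ι → ℂ) :
    (A * ketbra ψ * star A * H).trace = star (A *ᵥ ψ) ⬝ᵥ (H *ᵥ (A *ᵥ ψ)) := by
  rw [ketbra, Matrix.mul_vecMulVec, Matrix.star_eq_conjTranspose, Matrix.vecMulVec_mul,
    Matrix.vecMulVec_mul, Matrix.trace_vecMulVec, Matrix.star_mulVec, Matrix.dotProduct_mulVec,
    dotProduct_comm]

lemma energy_aux2 {ι : Type*} [Fintype ι] [DecidableEq ι]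
    {H : Matrix ι ι ℂ} (hH : H.IsHermitian) (φ : ι → ℂ) :
    (star φ ⬝ᵥ (H *ᵥ φ)).re = ∑ i, hH.eigenvalues i *
      Complex.normSq ((star (hH.eigenvectorUnitary : Matrix ι ι ℂ) *ᵥ φ) i) := by
  set U : Matrix ι ι ℂ := (hH.eigenvectorUnitary : Matrix ι ι ℂ) with hU
  have hs : H = U * diagonal (fun i => (hH.eigenvalues i : ℂ)) * star U := by
    have := hH.spectral_theorem
    rw [Unitary.conjStarAlgAut_apply] at this
    exact this
  have h1 : star φ ⬝ᵥ (H *ᵥ φ) = star (star U *ᵥ φ) ⬝ᵥ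
      (diagonal (fun i => (hH.eigenvalues i : ℂ)) *ᵥ (star U *ᵥ φ)) := by
    conv_lhs => rw [hs]
    rw [← Matrix.mulVec_mulVec, ← Matrix.mulVec_mulVec, Matrix.dotProduct_mulVec,
      Matrix.star_mulVec, Matrix.star_eq_conjTranspose, Matrix.conjTranspose_conjTranspose]
  rw [h1]
  simp only [dotProduct, Matrix.mulVec_diagonal, Complex.re_sum]
  refine Finset.sum_congr rfl fun i _ => ?_
  simp [Complex.normSq_apply]
  ring

lemma norm_aux {ι : Type*} [Fintype ι] (w : ι → ℂ) :
    star w ⬝ᵥ w = ((∑ i, Complex.normSq (w i) : ℝ) : ℂ) := by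
  simp [dotProduct, Complex.normSq_eq_conj_mul_self]

lemma unitary_aux {ι : Type*} [Fintype ι] [DecidableEq ι] (A : Matrix.unitaryGroup ι ℂ)
    (w : ι → ℂ) : star ((A : Matrix ι ι ℂ) *ᵥ w) ⬝ᵥ ((A : Matrix ι ι ℂ) *ᵥ w) = star w ⬝ᵥ w := by
  rw [Matrix.star_mulVec, ← Matrix.dotProduct_mulVec, Matrix.mulVec_mulVec,
    ← Matrix.star_eq_conjTranspose, Unitary.coe_star_mul_self, Matrix.one_mulVec]

lemma exists_aux {ι : Type*} [Fintype ι] [DecidableEq ι]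
    (ψ : ι → ℂ) (hψ : star ψ ⬝ᵥ ψ = 1) (i₀ : ι) :
    ∃ B : Matrix.unitaryGroup ι ℂ, (B : Matrix ι ι ℂ) *ᵥ ψ = Pi.single i₀ 1 := by
  have hn : ‖(WithLp.toLp 2 ψ : EuclideanSpace ℂ ι)‖ = 1 := by
    rw [norm_aux] at hψ
    have h : ∑ i, Complex.normSq (ψ i) = 1 := by exact_mod_cast hψ
    rw [EuclideanSpace.norm_eq]
    simp [← Complex.normSq_eq_norm_sq, h]
  obtain ⟨b, hb⟩ := Orthonormal.exists_orthonormalBasis_extension_of_card_eq (𝕜 := ℂ)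
    (E := EuclideanSpace ℂ ι) (ι := ι) (by simp)
    (v := fun _ => WithLp.toLp 2 ψ) (s := {i₀}) (by
      constructor
      · intro i; simpa using hn
      · intro i j hij; exact absurd (Subsingleton.elim i j) hij)
  have hb0 := hb i₀ rfl
  let C : Matrix.unitaryGroup ι ℂ :=
    ⟨(EuclideanSpace.basisFun ι ℂ).toBasis.toMatrix b.toBasis,
      (EuclideanSpace.basisFun ι ℂ).toMatrix_orthonormalBasis_mem_unitary b⟩
  have hC : (C : Matrix ι ι ℂ) *ᵥ Pi.single i₀ 1 = ψ := by
    ext i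
    simp [C, Module.Basis.toMatrix_apply, hb0]
  refine ⟨star C, ?_⟩
  rw [← hC, Matrix.mulVec_mulVec, Unitary.coe_star, Unitary.coe_star_mul_self, Matrix.one_mulVec]

/-- ergotropy of a pure state: ξ(|ψ⟩⟨ψ|, H) = ⟨ψ, Hψ⟩ − ε_min. -/
theorem ergotropy_pure_state {ι : Type*} [Fintype ι] [DecidableEq ι]
    {H : Matrix ι ι ℂ} (hH : H.IsHermitian)
    (ψ : ι → ℂ) (hψ : star ψ ⬝ᵥ ψ = 1) :
    ergotropy (ketbra ψ) H = (star ψ ⬝ᵥ H.mulVec ψ).re - ⨅ i, hH.eigenvalues i := by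
  have hne : Nonempty ι := by
    by_contra h
    rw [not_nonempty_iff] at h
    simp at hψ
  unfold ergotropy
  have h0 : (ketbra ψ * H).trace = star ψ ⬝ᵥ H.mulVec ψ := by
    have := energy_aux 1 H ψ
    simpa using this
  rw [h0]
  congr 1
  simp only [energy_aux, energy_aux2 hH]
  have hlow : ∀ V : Matrix.unitaryGroup ι ℂ, ⨅ i, hH.eigenvalues i ≤ ∑ i, hH.eigenvalues i *
      Complex.normSq ((star (hH.eigenvectorUnitary : Matrix ι ι ℂ) *ᵥ
        ((V : Matrix ι ι ℂ) *ᵥ ψ)) i) := by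
    intro V
    have h1 := unitary_aux (star hH.eigenvectorUnitary) ((V : Matrix ι ι ℂ) *ᵥ ψ)
    rw [unitary_aux V, hψ, norm_aux, Unitary.coe_star] at h1
    have h2 : ∑ i, Complex.normSq ((star (hH.eigenvectorUnitary : Matrix ι ι ℂ) *ᵥ
        ((V : Matrix ι ι ℂ) *ᵥ ψ)) i) = 1 := by exact_mod_cast h1
    calc ⨅ i, hH.eigenvalues i = ∑ j, (⨅ i, hH.eigenvalues i) *
          Complex.normSq ((star (hH.eigenvectorUnitary : Matrix ι ι ℂ) *ᵥ
          ((V : Matrix ι ι ℂ) *ᵥ ψ)) j) := by rw [← Finset.mul_sum, h2, mul_one]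
      _ ≤ _ := Finset.sum_le_sum fun j _ => mul_le_mul_of_nonneg_right
          (ciInf_le (Set.finite_range _).bddBelow j) (Complex.normSq_nonneg _)
  refine le_antisymm ?_ (le_ciInf hlow)
  obtain ⟨i₀, hi₀⟩ := exists_eq_ciInf_of_finite (f := hH.eigenvalues)
  obtain ⟨B, hB⟩ := exists_aux ψ hψ i₀
  refine (ciInf_le ⟨_, Set.forall_mem_range.2 hlow⟩ (hH.eigenvectorUnitary * B)).trans
    (le_of_eq ?_)
  rw [Matrix.UnitaryGroup.mul_val, ← Matrix.mulVec_mulVec, hB, Matrix.mulVec_mulVec,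
    Unitary.coe_star_mul_self, Matrix.one_mulVec, ← hi₀,
    Finset.sum_eq_single i₀ (by intro b _ hb; simp [hb]) (by simp)]
  simp
end

section
/- Let n ≤ m, let (α_k)_{k∈Fin n} be an orthonormal basis of ℂ^n, let (β_k)_{k∈Fin n} be an orthonormal family in ℂ^m, let λ : Fin n → ℝ with λ_k ≥ 0, and let ψ := ∑_k √λ_k (α_k ⊗ β_k) ∈ ℂ^{nm}, where (α ⊗ β)_{(i,j)} := α_i β_j. Set P_k := |α_k⟩⟨α_k|. Then ∑_k (P_k ⊗ I_m) |ψ⟩⟨ψ| (P_k ⊗ I_m) = ∑_k λ_k |α_k ⊗ β_k⟩⟨α_k ⊗ β_k|. -/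
open scoped BigOperators ComplexOrder
open Matrix Kronecker

lemma local_mulVec {n m : ℕ} (a u : Fin n → ℂ) (v : Fin m → ℂ) :
    (ketbra a ⊗ₖ (1 : Matrix (Fin m) (Fin m) ℂ)) *ᵥ vecTensor u v
      = (star a ⬝ᵥ u) • vecTensor a v := by
  funext p
  obtain ⟨i, j⟩ := p
  simp only [mulVec, dotProduct, Fintype.sum_prod_type, kroneckerMap_apply, ketbra, vecTensor,
    vecMulVec_apply, Pi.smul_apply, smul_eq_mul, Matrix.one_apply, mul_ite, ite_mul, mul_one,
    mul_zero, zero_mul, Finset.sum_ite_eq, Finset.mem_univ, if_true, Finset.sum_mul]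
  refine Finset.sum_congr rfl fun x _ => ?_
  ring

lemma ketbra_conj {ι : Type*} [Fintype ι] (A : Matrix ι ι ℂ) (hA : Aᴴ = A) (u : ι → ℂ) :
    A * ketbra u * A = ketbra (A *ᵥ u) := by
  unfold ketbra
  rw [mul_vecMulVec, vecMulVec_mul, star_mulVec, hA]

lemma local_herm {n m : ℕ} (a : Fin n → ℂ) :
    (ketbra a ⊗ₖ (1 : Matrix (Fin m) (Fin m) ℂ))ᴴ = ketbra a ⊗ₖ (1 : Matrix (Fin m) (Fin m) ℂ) := by
  rw [conjTranspose_kronecker, conjTranspose_one, ketbra, conjTranspose_vecMulVec, star_star]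

/-- pinching a pure state in Schmidt form by its Schmidt projectors
yields the corresponding diagonal mixture. -/
theorem pinch_schmidt_pure_state {n m : ℕ} (hnm : n ≤ m)
    (α : Fin n → Fin n → ℂ) (β : Fin n → Fin m → ℂ)
    (hα : ∀ k l, star (α k) ⬝ᵥ α l = if k = l then 1 else 0)
    (hβ : ∀ k l, star (β k) ⬝ᵥ β l = if k = l then 1 else 0)
    (lam : Fin n → ℝ) (hlam : ∀ k, 0 ≤ lam k)
    (ψ : Fin n × Fin m → ℂ)
    (hψ : ψ = ∑ k, ((Real.sqrt (lam k) : ℝ) : ℂ) • vecTensor (α k) (β k)) :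
    pinch (fun k => ketbra (α k)) (ketbra ψ)
      = ∑ k, ((lam k : ℝ) : ℂ) • ketbra (vecTensor (α k) (β k)) := by
  unfold pinch
  refine Finset.sum_congr rfl fun k _ => ?_
  have hk : (ketbra (α k) ⊗ₖ (1 : Matrix (Fin m) (Fin m) ℂ)) *ᵥ ψ
      = ((Real.sqrt (lam k) : ℝ) : ℂ) • vecTensor (α k) (β k) := by
    rw [hψ, mulVec_sum, Finset.sum_eq_single k]
    · rw [mulVec_smul, local_mulVec, hα, if_pos rfl, one_smul]
    · intro l _ hl
      rw [mulVec_smul, local_mulVec, hα, if_neg (Ne.symm hl), zero_smul, smul_zero]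
    · simp
  rw [ketbra_conj _ (local_herm _), hk]
  have h2 : ((Real.sqrt (lam k) : ℝ) : ℂ) * ((Real.sqrt (lam k) : ℝ) : ℂ) = (lam k : ℂ) := by
    rw [← Complex.ofReal_mul, Real.mul_self_sqrt (hlam k)]
  ext p q
  simp only [ketbra, vecMulVec_apply, Matrix.smul_apply, Pi.smul_apply, Pi.star_apply,
    smul_eq_mul, star_mul', RCLike.star_def, Complex.conj_ofReal, ← h2]
  ring
end

section
/- Let H be an N×N Hermitian complex matrix, let (v_i)_{i∈Fin N} be an orthonormal basis of ℂ^N, let λ : Fin N → ℝ with λ_i ≥ 0 and ∑_i λ_i = 1, and set σ := ∑_i λ_i |v_i⟩⟨v_i|. Then ξ(σ, H) = ∑_i λ_i ⟨v_i, H v_i⟩ − ∑_{i=1}^N λ_i^↓ ε_i^↑, where λ_1^↓ ≥ … ≥ λ_N^↓ is the nonincreasing rearrangement of λ and ε_1^↑ ≤ … ≤ ε_N^↑ are the eigenvalues of H listed with multiplicity in nondecreasing order. -/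
open scoped BigOperators ComplexOrder
open Matrix Kronecker

/-- The double sum attached to a doubly stochastic matrix is bounded below by the sorted sum. -/
theorem ds_lower {ι : Type*} [Fintype ι] [DecidableEq ι] (M : Matrix ι ι ℝ)
    (hM : M ∈ doublyStochastic ℝ ι) (lam eps : ι → ℝ) :
    ∑ i, sortDown lam i * sortUp eps i ≤ ∑ j, ∑ i, M j i * lam i * eps j := by
  obtain ⟨w, hw0, hw1, rfl⟩ := exists_eq_sum_perm_of_mem_doublyStochastic hM
  have hperm : ∀ π : Equiv.Perm ι,
      ∑ i, sortDown lam i * sortUp eps i ≤ ∑ j, lam (π j) * eps j := by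
    intro π
    let d : Fin (Fintype.card ι) ≃ ι :=
      (Fin.revPerm.trans (Tuple.sort (lam ∘ (Fintype.equivFin ι).symm))).trans
        (Fintype.equivFin ι).symm
    let e : Fin (Fintype.card ι) ≃ ι :=
      (Tuple.sort (eps ∘ (Fintype.equivFin ι).symm)).trans (Fintype.equivFin ι).symm
    have hup : Monotone (sortUp eps) := Tuple.monotone_sort _
    have hup' : Monotone (sortUp lam) := Tuple.monotone_sort _
    have hdown : Antitone (sortDown lam) := fun a b hab => hup' (Fin.rev_le_rev.mpr hab)
    have hd : ∀ k, sortDown lam k = lam (d k) := fun k => rfl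
    have he : ∀ k, sortUp eps k = eps (e k) := fun k => rfl
    have hav : Antivary (sortDown lam) (sortUp eps) := hdown.antivary hup
    have := hav.sum_mul_le_sum_comp_perm_mul (σ := (e.trans π).trans d.symm)
    refine this.trans (le_of_eq ?_)
    rw [← e.sum_comp]
    refine Finset.sum_congr rfl fun k _ => ?_
    simp [hd, he]
  have key : ∑ j, ∑ i, (∑ σ, w σ • σ.permMatrix ℝ) j i * lam i * eps j
      = ∑ σ, w σ * ∑ j, lam (σ j) * eps j := by
    simp only [Matrix.sum_apply, Matrix.smul_apply, Finset.sum_mul, Finset.mul_sum]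
    rw [Finset.sum_congr rfl fun j _ => Finset.sum_comm, Finset.sum_comm]
    refine Finset.sum_congr rfl fun σ _ => Finset.sum_congr rfl fun j _ => ?_
    rw [Finset.sum_eq_single (σ j)]
    · simp [Equiv.Perm.permMatrix, PEquiv.toMatrix_apply]; ring
    · intro b _ hb
      simp [Equiv.Perm.permMatrix, PEquiv.toMatrix_apply, Ne.symm hb]
    · simp
  rw [key]
  calc ∑ i, sortDown lam i * sortUp eps i
      = ∑ σ, w σ * ∑ i, sortDown lam i * sortUp eps i := by
        rw [← Finset.sum_mul, hw1, one_mul]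
    _ ≤ _ := Finset.sum_le_sum fun σ _ => mul_le_mul_of_nonneg_left (hperm σ) (hw0 σ)

theorem trace_form {ι : Type*} [Fintype ι] [DecidableEq ι] (X : Matrix ι ι ℂ)
    (lam eps : ι → ℝ) :
    ((X * diagonal (fun i => (lam i : ℂ)) * star X * diagonal (fun i => (eps i : ℂ))).trace).re
      = ∑ j, ∑ i, Complex.normSq (X j i) * lam i * eps j := by
  simp only [Matrix.trace, Matrix.diag_apply, Matrix.mul_diagonal, Complex.re_sum]
  refine Finset.sum_congr rfl fun j _ => ?_
  rw [Matrix.mul_apply, Finset.sum_mul, Complex.re_sum]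
  refine Finset.sum_congr rfl fun i _ => ?_
  rw [Matrix.mul_diagonal, Matrix.star_apply, ← Complex.ofReal_re (_ * _ * _)]
  congr 1
  push_cast
  rw [Complex.normSq_eq_conj_mul_self]
  simp only [starRingEnd_apply]
  ring

theorem unitary_ds {ι : Type*} [Fintype ι] [DecidableEq ι] (X : Matrix ι ι ℂ)
    (hX : X ∈ Matrix.unitaryGroup ι ℂ) :
    (Matrix.of fun j i => Complex.normSq (X j i)) ∈ doublyStochastic ℝ ι := by
  rw [mem_doublyStochastic_iff_sum]
  refine ⟨fun i j => Complex.normSq_nonneg _, fun j => ?_, fun i => ?_⟩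
  · have h := congrFun (congrFun (Matrix.mem_unitaryGroup_iff.mp hX) j) j
    rw [Matrix.mul_apply] at h
    rw [← Complex.ofReal_inj]
    push_cast
    rw [Matrix.one_apply_eq] at h
    rw [← h]
    refine Finset.sum_congr rfl fun i _ => ?_
    rw [Matrix.of_apply, Complex.normSq_eq_conj_mul_self, Matrix.star_apply, mul_comm]
    rfl
  · have h := congrFun (congrFun (Matrix.mem_unitaryGroup_iff'.mp hX) i) i
    rw [Matrix.mul_apply] at h
    rw [← Complex.ofReal_inj]
    push_cast
    rw [Matrix.one_apply_eq] at h
    rw [← h]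
    refine Finset.sum_congr rfl fun j _ => ?_
    rw [Matrix.of_apply, Complex.normSq_eq_conj_mul_self, Matrix.star_apply]
    rfl

theorem attain {ι : Type*} [Fintype ι] [DecidableEq ι] (lam eps : ι → ℝ) :
    ∃ X ∈ Matrix.unitaryGroup ι ℂ,
      ∑ j, ∑ i, Complex.normSq (X j i) * lam i * eps j
        = ∑ i, sortDown lam i * sortUp eps i := by
  let d : Fin (Fintype.card ι) ≃ ι :=
    (Fin.revPerm.trans (Tuple.sort (lam ∘ (Fintype.equivFin ι).symm))).trans
      (Fintype.equivFin ι).symm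
  let e : Fin (Fintype.card ι) ≃ ι :=
    (Tuple.sort (eps ∘ (Fintype.equivFin ι).symm)).trans (Fintype.equivFin ι).symm
  have hd : ∀ k, sortDown lam k = lam (d k) := fun k => rfl
  have he : ∀ k, sortUp eps k = eps (e k) := fun k => rfl
  let π : Equiv.Perm ι := e.symm.trans d
  refine ⟨Matrix.of fun j i => if π j = i then 1 else 0, ?_, ?_⟩
  · rw [Matrix.mem_unitaryGroup_iff]
    ext a b
    simp [Matrix.mul_apply, Matrix.star_apply, Matrix.one_apply, apply_ite, eq_comm]
  · rw [← e.sum_comp]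
    refine Finset.sum_congr rfl fun k _ => ?_
    rw [Finset.sum_eq_single (d k)]
    · simp [hd, he, π]
    · intro b _ hb
      simp [π, Ne.symm hb]
    · simp

/-- ergotropy of a state diagonal in an orthonormal basis. -/
theorem ergotropy_diagonal_state {ι : Type*} [Fintype ι] [DecidableEq ι]
    {H : Matrix ι ι ℂ} (hH : H.IsHermitian)
    (v : ι → ι → ℂ)
    (hv : ∀ i j, star (v i) ⬝ᵥ v j = if i = j then 1 else 0)
    (lam : ι → ℝ) (hlam : ∀ i, 0 ≤ lam i) (hsum : ∑ i, lam i = 1) :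
    ergotropy (∑ i, ((lam i : ℝ) : ℂ) • ketbra (v i)) H
      = ∑ i, lam i * (star (v i) ⬝ᵥ H.mulVec (v i)).re
        - ∑ i, sortDown lam i * sortUp hH.eigenvalues i := by
  set W : Matrix ι ι ℂ := Matrix.of fun a i => v i a with hW
  have hWu : W ∈ Matrix.unitaryGroup ι ℂ := by
    rw [Matrix.mem_unitaryGroup_iff']
    ext i j
    rw [Matrix.one_apply, ← hv i j]
    rfl
  have hσ : (∑ i, ((lam i : ℝ) : ℂ) • ketbra (v i))
      = W * diagonal (fun i => (lam i : ℂ)) * star W := by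
    ext a b
    rw [Matrix.sum_apply, Matrix.mul_apply]
    refine Finset.sum_congr rfl fun i _ => ?_
    rw [Matrix.mul_diagonal, Matrix.star_apply]
    simp [ketbra, Matrix.vecMulVec_apply, hW]
    ring
  have hfirst : (((∑ i, ((lam i : ℝ) : ℂ) • ketbra (v i)) * H).trace).re
      = ∑ i, lam i * (star (v i) ⬝ᵥ H.mulVec (v i)).re := by
    rw [Finset.sum_mul, Matrix.trace_sum, Complex.re_sum]
    refine Finset.sum_congr rfl fun i _ => ?_
    rw [Matrix.smul_mul, Matrix.trace_smul, smul_eq_mul, Complex.re_ofReal_mul, ketbra,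
      Matrix.vecMulVec_mul, Matrix.trace_vecMulVec, dotProduct_comm, Matrix.dotProduct_mulVec]
  have hspec : H = (hH.eigenvectorUnitary : Matrix ι ι ℂ)
      * diagonal (fun i => (hH.eigenvalues i : ℂ))
      * star (hH.eigenvectorUnitary : Matrix ι ι ℂ) := by
    have := hH.spectral_theorem
    rw [Unitary.conjStarAlgAut_apply] at this
    exact this
  set U : Matrix ι ι ℂ := (hH.eigenvectorUnitary : Matrix ι ι ℂ) with hU
  have hUu : U ∈ Matrix.unitaryGroup ι ℂ := hH.eigenvectorUnitary.2
  have hval : ∀ V : Matrix ι ι ℂ,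
      ((V * (∑ i, ((lam i : ℝ) : ℂ) • ketbra (v i)) * star V * H).trace).re
        = ∑ j, ∑ i, Complex.normSq ((star U * V * W) j i) * lam i * hH.eigenvalues j := by
    intro V
    rw [← trace_form, hσ]
    conv_lhs => rw [hspec]
    congr 1
    simp only [star_mul, star_star, ← Matrix.mul_assoc]
    rw [Matrix.trace_mul_comm]
    simp only [← Matrix.mul_assoc]
  unfold ergotropy
  rw [hfirst]
  congr 1
  have hlow : ∀ V : Matrix.unitaryGroup ι ℂ,
      ∑ i, sortDown lam i * sortUp hH.eigenvalues i ≤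
      (((V : Matrix ι ι ℂ) * (∑ i, ((lam i : ℝ) : ℂ) • ketbra (v i))
        * star (V : Matrix ι ι ℂ) * H).trace).re := by
    intro V
    rw [hval]
    exact ds_lower _ (unitary_ds _ (mul_mem (mul_mem (Unitary.star_mem hUu) V.2) hWu)) _ _
  apply le_antisymm
  · obtain ⟨X, hX, hXe⟩ := attain lam hH.eigenvalues
    have hV : U * X * star W ∈ Matrix.unitaryGroup ι ℂ :=
      mul_mem (mul_mem hUu hX) (Unitary.star_mem hWu)
    refine (ciInf_le ⟨_, Set.forall_mem_range.mpr hlow⟩ (⟨_, hV⟩ : Matrix.unitaryGroup ι ℂ)).trans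
      (le_of_eq ?_)
    rw [hval, ← hXe]
    have : star U * (U * X * star W) * W = X := by
      have h1 := Matrix.mem_unitaryGroup_iff'.mp hUu
      have h2 := Matrix.mem_unitaryGroup_iff'.mp hWu
      calc star U * (U * X * star W) * W = (star U * U) * X * (star W * W) := by
            simp only [Matrix.mul_assoc]
        _ = X := by rw [h1, h2, Matrix.one_mul, Matrix.mul_one]
    simp only [this]
  · exact le_ciInf hlow
end

section
/- (Theorem 2, closed form of EMIN for pure states) Let n ≤ m, let (α_k)_{k∈Fin n} be an orthonormal basis of ℂ^n, (β_k)_{k∈Fin n} an orthonormal family in ℂ^m, λ : Fin n → ℝ with λ_k ≥ 0 and ∑_k λ_k = 1, and ψ := ∑_k √λ_k (α_k ⊗ β_k). Let H be an nm×nm Hermitian matrix admitting a decomposition H = ∑_l s_l (A_l ⊗ B_l) with s_l ∈ ℝ, A_l n×n matrices and B_l m×m matrices. Let Π be the measurement channel with projectors P_k := |α_k⟩⟨α_k|. Then ξ(|ψ⟩⟨ψ|,H) − ξ(Π(|ψ⟩⟨ψ|),H) = ∑_{i,j,l; i≠j} √(λ_i λ_j) s_l ⟨α_j, A_l α_i⟩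 ⟨β_j, B_l β_i⟩ + ∑_{k=1}^{nm} ε_k^↑ μ_k^↓ − ε_min, where the (necessarily real) first sum runs over i ≠ j, μ^↓ is the nonincreasing rearrangement of λ padded with nm − n zeros, ε_1^↑ ≤ … ≤ ε_{nm}^↑ are the eigenvalues of H in nondecreasing order with multiplicity, and ε_min = ε_1^↑. -/
open scoped BigOperators ComplexOrder
open Matrix Kronecker

section Helpers

theorem trace_diag_conj {ι : Type*} [Fintype ι] [DecidableEq ι] (μ ε : ι → ℝ) (Q : Matrix ι ι ℂ) :
    (Q * diagonal (fun p => (μ p : ℂ)) * star Q * diagonal (fun p => (ε p : ℂ))).trace.re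
      = ∑ p, ∑ q, μ p * ε q * Complex.normSq (Q q p) := by
  rw [Finset.sum_comm]
  rw [Matrix.trace, Complex.re_sum]
  refine Finset.sum_congr rfl fun q _ => ?_
  rw [Matrix.diag_apply, Matrix.mul_diagonal, Matrix.mul_apply, Finset.sum_mul, Complex.re_sum]
  refine Finset.sum_congr rfl fun p _ => ?_
  rw [Matrix.mul_diagonal, Matrix.star_apply]
  simp [Complex.normSq_apply]
  ring

theorem normSq_doublyStochastic {ι : Type*} [Fintype ι] [DecidableEq ι] (Q : Matrix ι ι ℂ)
    (hQ : Q ∈ Matrix.unitaryGroup ι ℂ) :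
    (Matrix.of fun p q => Complex.normSq (Q q p)) ∈ doublyStochastic ℝ ι := by
  rw [mem_doublyStochastic_iff_sum]
  refine ⟨fun i j => Complex.normSq_nonneg _, fun i => ?_, fun i => ?_⟩
  · have h := congrFun (congrFun (Matrix.mem_unitaryGroup_iff'.1 hQ) i) i
    have h2 := congrArg Complex.re h
    simpa [Matrix.mul_apply, Complex.normSq_apply] using h2
  · have h := congrFun (congrFun (Matrix.mem_unitaryGroup_iff.1 hQ) i) i
    have h2 := congrArg Complex.re h
    simpa [Matrix.mul_apply, Complex.normSq_apply] using h2

theorem iInf_perm_le {ι : Type*} [Fintype ι] [DecidableEq ι] (μ ε : ι → ℝ) (Q : Matrix ι ι ℂ)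
    (hQ : Q ∈ Matrix.unitaryGroup ι ℂ) :
    (⨅ σ : Equiv.Perm ι, ∑ p, μ p * ε (σ p)) ≤
      ∑ p, ∑ q, μ p * ε q * Complex.normSq (Q q p) := by
  obtain ⟨w, hw0, hw1, hw⟩ :=
    exists_eq_sum_perm_of_mem_doublyStochastic (normSq_doublyStochastic Q hQ)
  have hM : ∀ p q, Complex.normSq (Q q p) = ∑ σ : Equiv.Perm ι, w σ * (if σ p = q then 1 else 0) := by
    intro p q
    have := congrFun (congrFun hw p) q
    rw [Matrix.of_apply] at this
    rw [← this, Matrix.sum_apply]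
    refine Finset.sum_congr rfl fun σ _ => ?_
    simp [Equiv.Perm.permMatrix, PEquiv.toMatrix_apply, Equiv.toPEquiv_apply, eq_comm]
  have h1 : ∑ p, ∑ q, μ p * ε q * Complex.normSq (Q q p)
      = ∑ σ : Equiv.Perm ι, w σ * ∑ p, μ p * ε (σ p) := by
    simp only [hM, Finset.mul_sum]
    have : ∀ p, ∑ q, ∑ σ : Equiv.Perm ι, μ p * ε q * (w σ * (if σ p = q then 1 else 0))
        = ∑ σ : Equiv.Perm ι, w σ * (μ p * ε (σ p)) := by
      intro p
      rw [Finset.sum_comm]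
      refine Finset.sum_congr rfl fun σ _ => ?_
      simp; ring
    simp only [this]
    rw [Finset.sum_comm]
  rw [h1]
  calc (⨅ σ : Equiv.Perm ι, ∑ p, μ p * ε (σ p))
      = ∑ τ, w τ * (⨅ σ : Equiv.Perm ι, ∑ p, μ p * ε (σ p)) := by
        rw [← Finset.sum_mul, hw1, one_mul]
    _ ≤ _ := Finset.sum_le_sum fun τ _ =>
        mul_le_mul_of_nonneg_left (ciInf_le (Set.finite_range _).bddBelow τ) (hw0 τ)

theorem iInf_unitary_eq {ι : Type*} [Fintype ι] [DecidableEq ι] {H : Matrix ι ι ℂ}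
    (hH : H.IsHermitian) (μ : ι → ℝ) (W : Matrix.unitaryGroup ι ℂ) (ρ : Matrix ι ι ℂ)
    (hρ : ρ = (W : Matrix ι ι ℂ) * diagonal (fun p => (μ p : ℂ)) * star (W : Matrix ι ι ℂ)) :
    (⨅ V : Matrix.unitaryGroup ι ℂ,
      (((V : Matrix ι ι ℂ) * ρ * star (V : Matrix ι ι ℂ) * H).trace).re)
      = ⨅ σ : Equiv.Perm ι, ∑ p, μ p * hH.eigenvalues (σ p) := by
  set U := hH.eigenvectorUnitary with hU
  have key : ∀ V : Matrix.unitaryGroup ι ℂ,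
      (((V : Matrix ι ι ℂ) * ρ * star (V : Matrix ι ι ℂ) * H).trace).re
      = ∑ p, ∑ q, μ p * hH.eigenvalues q *
          Complex.normSq (((star U * V * W : Matrix.unitaryGroup ι ℂ) : Matrix ι ι ℂ) q p) := by
    intro V
    rw [← trace_diag_conj]
    have hs : H = (U : Matrix ι ι ℂ) * diagonal (fun p => (hH.eigenvalues p : ℂ)) *
        star (U : Matrix ι ι ℂ) := by
      conv_lhs => rw [hH.spectral_theorem, Unitary.conjStarAlgAut_apply]
      rfl
    conv_lhs => rw [hs]
    rw [hρ]
    congr 1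
    rw [← Matrix.mul_assoc, ← Matrix.mul_assoc, Matrix.trace_mul_comm]
    congr 1
    simp [Matrix.mul_assoc]
  have hlow : ∀ V : Matrix.unitaryGroup ι ℂ,
      (⨅ σ : Equiv.Perm ι, ∑ p, μ p * hH.eigenvalues (σ p)) ≤
      (((V : Matrix ι ι ℂ) * ρ * star (V : Matrix ι ι ℂ) * H).trace).re := by
    intro V
    rw [key]
    exact iInf_perm_le _ _ _ (star U * V * W : Matrix.unitaryGroup ι ℂ).2
  apply le_antisymm
  · refine le_ciInf fun σ => ?_
    let Q : Matrix ι ι ℂ := Matrix.of fun q p => if q = σ p then 1 else 0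
    have hQ : Q ∈ Matrix.unitaryGroup ι ℂ := by
      rw [Matrix.mem_unitaryGroup_iff']
      ext i j
      simp [Q, Matrix.mul_apply, Matrix.one_apply, eq_comm]
    have hb := ciInf_le (f := fun V : Matrix.unitaryGroup ι ℂ =>
      (((V : Matrix ι ι ℂ) * ρ * star (V : Matrix ι ι ℂ) * H).trace).re)
      ⟨_, by rintro _ ⟨V, rfl⟩; exact hlow V⟩ (U * ⟨Q, hQ⟩ * star W)
    refine hb.trans (le_of_eq ?_)
    rw [key]
    have : star U * (U * ⟨Q, hQ⟩ * star W) * W = ⟨Q, hQ⟩ := by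
      have h1 : star U * U = 1 := Unitary.star_mul_self U
      have h2 : star W * W = 1 := Unitary.star_mul_self W
      calc star U * (U * ⟨Q, hQ⟩ * star W) * W = (star U * U) * ⟨Q, hQ⟩ * (star W * W) := by
            simp only [mul_assoc]
        _ = _ := by rw [h1, h2]; simp
    rw [this]
    refine Finset.sum_congr rfl fun p _ => ?_
    simp [Q, apply_ite Complex.normSq]
  · exact le_ciInf hlow

theorem iInf_perm_eq_sort {ι : Type*} [Fintype ι] [DecidableEq ι] (μ ε : ι → ℝ) :
    (⨅ σ : Equiv.Perm ι, ∑ p, μ p * ε (σ p)) = ∑ k, sortUp ε k * sortDown μ k := by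
  let e : Fin (Fintype.card ι) ≃ ι :=
    (Tuple.sort (ε ∘ (Fintype.equivFin ι).symm)).trans (Fintype.equivFin ι).symm
  let e' : Fin (Fintype.card ι) ≃ ι :=
    (Fin.revPerm.trans (Tuple.sort (μ ∘ (Fintype.equivFin ι).symm))).trans (Fintype.equivFin ι).symm
  have he : ∀ k, sortUp ε k = ε (e k) := fun k => rfl
  have he' : ∀ k, sortDown μ k = μ (e' k) := fun k => rfl
  have hmono : Monotone (sortUp ε) := Tuple.monotone_sort _
  have hanti : Antitone (sortDown μ) := by
    intro a b hab
    exact Tuple.monotone_sort (μ ∘ (Fintype.equivFin ι).symm) (Fin.rev_le_rev.2 hab)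
  have hav : Antivary (sortDown μ) (sortUp ε) := by
    intro i j hij
    exact hanti (le_of_lt (hmono.reflect_lt hij))
  apply le_antisymm
  · refine (ciInf_le (Set.finite_range _).bddBelow (e'.symm.trans e)).trans (le_of_eq ?_)
    rw [← Equiv.sum_comp e']
    refine Finset.sum_congr rfl fun k _ => ?_
    simp [he, he', mul_comm]
  · refine le_ciInf fun σ => ?_
    have h := hav.sum_mul_le_sum_mul_comp_perm (σ := (e'.trans σ).trans e.symm)
    rw [← Equiv.sum_comp e']
    simp only [mul_comm (sortUp ε _)]
    refine h.trans (le_of_eq ?_)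
    refine Finset.sum_congr rfl fun k _ => ?_
    simp [he, he']

theorem iInf_perm_single {ι : Type*} [Fintype ι] [DecidableEq ι] (p₀ : ι) (ε : ι → ℝ) :
    (⨅ σ : Equiv.Perm ι, ∑ p, (Pi.single p₀ (1 : ℝ) : ι → ℝ) p * ε (σ p)) = ⨅ p, ε p := by
  have h : ∀ σ : Equiv.Perm ι, ∑ p, (Pi.single p₀ (1 : ℝ) : ι → ℝ) p * ε (σ p) = ε (σ p₀) := by
    intro σ
    simp [Pi.single_apply]
  simp only [h]
  have : Nonempty ι := ⟨p₀⟩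
  apply le_antisymm
  · refine le_ciInf fun p => ?_
    refine (ciInf_le (Set.finite_range _).bddBelow (Equiv.swap p₀ p)).trans (le_of_eq ?_)
    simp
  · exact le_ciInf fun σ => ciInf_le (Set.finite_range _).bddBelow _

theorem exists_unitary_extension {ι κ : Type*} [Fintype ι] [DecidableEq ι] [Fintype κ]
    [DecidableEq κ] (v : κ → ι → ℂ)
    (hv : ∀ k l, star (v k) ⬝ᵥ v l = if k = l then 1 else 0) (f : κ → ι)
    (hf : Function.Injective f) (μ : ι → ℝ) (hμ0 : ∀ p, p ∉ Set.range f → μ p = 0) :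
    ∃ W : Matrix.unitaryGroup ι ℂ, ∑ k, (μ (f k) : ℂ) • ketbra (v k)
      = (W : Matrix ι ι ℂ) * diagonal (fun p => (μ p : ℂ)) * star (W : Matrix ι ι ℂ) := by
  classical
  let u : ι → EuclideanSpace ℂ ι := Function.extend f (fun k => WithLp.toLp 2 (v k)) 0
  have hu : ∀ k, u (f k) = WithLp.toLp 2 (v k) := fun k => hf.extend_apply _ _ _
  have ho : Orthonormal ℂ ((Set.range f).domRestrict u) := by
    rw [orthonormal_iff_ite]
    rintro ⟨_, k, rfl⟩ ⟨_, l, rfl⟩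
    change inner ℂ (u (f k)) (u (f l)) = _
    rw [hu, hu, EuclideanSpace.inner_eq_star_dotProduct, dotProduct_comm]
    change star (v k) ⬝ᵥ v l = _
    rw [hv]
    by_cases h : k = l
    · subst h
      rw [if_pos rfl, if_pos rfl]
    · rw [if_neg h, if_neg (fun h' => h (hf (congrArg Subtype.val h')))]
  obtain ⟨b, hb⟩ := ho.exists_orthonormalBasis_extension_of_card_eq (by simp)
  have hW : (Matrix.of fun i p => b p i) ∈ Matrix.unitaryGroup ι ℂ := by
    rw [Matrix.mem_unitaryGroup_iff']
    ext p q
    have := orthonormal_iff_ite.1 b.orthonormal p q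
    rw [EuclideanSpace.inner_eq_star_dotProduct, dotProduct_comm] at this
    rw [Matrix.one_apply, ← this]
    simp [Matrix.mul_apply, dotProduct]
  refine ⟨⟨_, hW⟩, ?_⟩
  ext i j
  have hbk : ∀ k, b (f k) = WithLp.toLp 2 (v k) := fun k => by rw [hb _ ⟨k, rfl⟩, hu]
  rw [Matrix.mul_apply]
  simp only [Matrix.mul_diagonal]
  simp only [Matrix.sum_apply, Matrix.smul_apply, ketbra,
    vecMulVec_apply, Matrix.star_apply, Matrix.of_apply, smul_eq_mul]
  have hz : ∀ p, p ∉ Finset.univ.image f → b p i * (μ p : ℂ) * star (b p j) = 0 := by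
    intro p hp
    rw [hμ0 p (by simpa using hp)]
    simp
  rw [← Finset.sum_subset (Finset.subset_univ (Finset.univ.image f)) (fun p _ hp => hz p hp),
    Finset.sum_image (fun a _ b _ h => hf h)]
  refine Finset.sum_congr rfl fun k _ => ?_
  simp [hbk]
  ring

theorem trace_ketbra_mul {ι : Type*} [Fintype ι] (u : ι → ℂ) (H : Matrix ι ι ℂ) :
    (ketbra u * H).trace = star u ⬝ᵥ H.mulVec u := by
  rw [ketbra, Matrix.vecMulVec_mul, Matrix.trace_vecMulVec, dotProduct_comm, Matrix.dotProduct_mulVec]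

theorem tensor_dot {ιa ιb : Type*} [Fintype ιa] [Fintype ιb] (a c : ιa → ℂ) (b d : ιb → ℂ) :
    star (vecTensor a b) ⬝ᵥ vecTensor c d = (star a ⬝ᵥ c) * (star b ⬝ᵥ d) := by
  simp only [dotProduct, vecTensor, Fintype.sum_prod_type, Finset.sum_mul_sum, Pi.star_apply,
    star_mul']
  refine Finset.sum_congr rfl fun i _ => Finset.sum_congr rfl fun j _ => ?_
  ring

theorem kron_mulVec_tensor {ιa ιb : Type*} [Fintype ιa] [Fintype ιb] (A : Matrix ιa ιa ℂ)
    (B : Matrix ιb ιb ℂ) (a : ιa → ℂ) (b : ιb → ℂ) :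
    (A ⊗ₖ B).mulVec (vecTensor a b) = vecTensor (A.mulVec a) (B.mulVec b) := by
  ext ⟨i, j⟩
  simp only [Matrix.mulVec, dotProduct, vecTensor, Fintype.sum_prod_type, Finset.sum_mul_sum,
    kroneckerMap_apply]
  refine Finset.sum_congr rfl fun i _ => Finset.sum_congr rfl fun j _ => ?_
  ring

theorem mul_ketbra_mul {ι : Type*} [Fintype ι] (P : Matrix ι ι ℂ) (hP : P.IsHermitian)
    (u : ι → ℂ) : P * ketbra u * P = ketbra (P.mulVec u) := by
  rw [ketbra, ketbra, Matrix.mul_vecMulVec, Matrix.vecMulVec_mul, Matrix.star_mulVec, hP.eq]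

theorem ketbra_smul {ι : Type*} (c : ℝ) (u : ι → ℂ) :
    ketbra ((c : ℂ) • u) = ((c * c : ℝ) : ℂ) • ketbra u := by
  ext i j
  simp [ketbra, vecMulVec_apply]
  ring

theorem pinch_eq {n m : ℕ} (α : Fin n → Fin n → ℂ) (β : Fin n → Fin m → ℂ)
    (hα : ∀ k l, star (α k) ⬝ᵥ α l = if k = l then 1 else 0)
    (lam : Fin n → ℝ) (hlam : ∀ k, 0 ≤ lam k) :
    pinch (fun k => ketbra (α k))
      (ketbra (∑ k, ((Real.sqrt (lam k) : ℝ) : ℂ) • vecTensor (α k) (β k)))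
      = ∑ k, (lam k : ℂ) • ketbra (vecTensor (α k) (β k)) := by
  unfold pinch
  refine Finset.sum_congr rfl fun k _ => ?_
  have hP : (ketbra (α k) ⊗ₖ (1 : Matrix (Fin m) (Fin m) ℂ)).IsHermitian := by
    ext ⟨i, j⟩ ⟨i', j'⟩
    by_cases h : j = j'
    · subst h
      simp [ketbra, vecMulVec_apply, mul_comm]
    · simp [ketbra, vecMulVec_apply, Matrix.one_apply, h, Ne.symm h]
  rw [mul_ketbra_mul _ hP]
  have : (ketbra (α k) ⊗ₖ (1 : Matrix (Fin m) (Fin m) ℂ)).mulVec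
      (∑ k, ((Real.sqrt (lam k) : ℝ) : ℂ) • vecTensor (α k) (β k))
      = ((Real.sqrt (lam k) : ℝ) : ℂ) • vecTensor (α k) (β k) := by
    rw [Matrix.mulVec_sum, Finset.sum_eq_single k]
    · rw [Matrix.mulVec_smul, kron_mulVec_tensor, ketbra, Matrix.vecMulVec_mulVec, hα]
      simp
    · intro l _ hl
      rw [Matrix.mulVec_smul, kron_mulVec_tensor, ketbra, Matrix.vecMulVec_mulVec, hα,
        if_neg (Ne.symm hl)]
      ext; simp [vecTensor]
    · simp
  rw [this, ketbra_smul, Real.mul_self_sqrt (hlam k)]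

end Helpers

/-- Theorem 2 of the paper: closed form of EMIN for pure states. -/
theorem emin_pure_state_closed_form {n m : ℕ} (hnm : n ≤ m)
    (α : Fin n → Fin n → ℂ) (β : Fin n → Fin m → ℂ)
    (hα : ∀ k l, star (α k) ⬝ᵥ α l = if k = l then 1 else 0)
    (hβ : ∀ k l, star (β k) ⬝ᵥ β l = if k = l then 1 else 0)
    (lam : Fin n → ℝ) (hlam : ∀ k, 0 ≤ lam k) (hsum : ∑ k, lam k = 1)
    (ψ : Fin n × Fin m → ℂ)
    (hψ : ψ = ∑ k, ((Real.sqrt (lam k) : ℝ) : ℂ) • vecTensor (α k) (β k))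
    {H : Matrix (Fin n × Fin m) (Fin n × Fin m) ℂ} (hH : H.IsHermitian)
    {L : Type*} [Fintype L] (s : L → ℝ)
    (A : L → Matrix (Fin n) (Fin n) ℂ) (B : L → Matrix (Fin m) (Fin m) ℂ)
    (hHdec : H = ∑ l, ((s l : ℝ) : ℂ) • (A l ⊗ₖ B l))
    -- μ is λ padded with nm − n zeros:
    (μ : Fin n × Fin m → ℝ) (f : Fin n → Fin n × Fin m) (hf : Function.Injective f)
    (hμf : ∀ k, μ (f k) = lam k) (hμ0 : ∀ p, p ∉ Set.range f → μ p = 0) :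
    ergotropy (ketbra ψ) H - ergotropy (pinch (fun k => ketbra (α k)) (ketbra ψ)) H
      = (∑ i, ∑ j, ∑ l, if i = j then 0 else
            ((Real.sqrt (lam i * lam j) : ℝ) : ℂ) * ((s l : ℝ) : ℂ) *
              (star (α j) ⬝ᵥ (A l).mulVec (α i)) * (star (β j) ⬝ᵥ (B l).mulVec (β i))).re
        + ∑ k, sortUp hH.eigenvalues k * sortDown μ k
        - ⨅ p, hH.eigenvalues p := by
  set v : Fin n → Fin n × Fin m → ℂ := fun k => vecTensor (α k) (β k) with hvdef
  have hv : ∀ k l, star (v k) ⬝ᵥ v l = if k = l then 1 else 0 := by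
    intro k l
    simp only [v, tensor_dot, hα, hβ]
    split_ifs <;> simp
  -- the pinched state
  have hpin : pinch (fun k => ketbra (α k)) (ketbra ψ) = ∑ k, (lam k : ℂ) • ketbra (v k) := by
    rw [hψ]; exact pinch_eq α β hα lam hlam
  obtain ⟨W, hW⟩ := exists_unitary_extension v hv f hf μ hμ0
  simp only [hμf] at hW
  have hinf2 := iInf_unitary_eq hH μ W _ (hpin.trans hW)
  rw [iInf_perm_eq_sort] at hinf2
  -- the pure state
  have hψdot : star ψ ⬝ᵥ ψ = 1 := by
    have h1 : ∀ i j, star (((Real.sqrt (lam j) : ℝ) : ℂ) • v j) ⬝ᵥ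
        (((Real.sqrt (lam i) : ℝ) : ℂ) • v i) = if j = i then (lam i : ℂ) else 0 := by
      intro i j
      rw [star_smul, smul_dotProduct, dotProduct_smul, hv]
      split_ifs with h
      · subst h
        simp only [smul_eq_mul, mul_one, Complex.star_def, Complex.conj_ofReal]
        rw [← Complex.ofReal_mul, Real.mul_self_sqrt (hlam j)]
      · simp
    rw [hψ, star_sum, sum_dotProduct]
    simp only [dotProduct_sum]
    change ∑ j, ∑ i, star (((Real.sqrt (lam j) : ℝ) : ℂ) • v j) ⬝ᵥ
        (((Real.sqrt (lam i) : ℝ) : ℂ) • v i) = 1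
    simp only [h1]
    simp
    exact_mod_cast hsum
  have hn : 0 < n := by
    rcases Nat.eq_zero_or_pos n with h | h
    · subst h; simp at hsum
    · exact h
  let p₀ : Fin n × Fin m := f ⟨0, hn⟩
  obtain ⟨W', hW'⟩ := exists_unitary_extension (κ := Unit) (fun _ => ψ)
    (by intro k l; simp [hψdot]) (fun _ => p₀) (fun _ _ _ => rfl) (Pi.single p₀ (1 : ℝ))
    (by intro p hp; exact Pi.single_eq_of_ne (fun h => hp ⟨(), h.symm⟩) _)
  have hinf1 := iInf_unitary_eq hH (Pi.single p₀ (1 : ℝ)) W' (ketbra ψ) (by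
    rw [← hW']; simp)
  rw [iInf_perm_single] at hinf1
  -- the energies
  have hE : ∀ i j, star (v j) ⬝ᵥ H.mulVec (v i) = ∑ l, ((s l : ℝ) : ℂ) *
      ((star (α j) ⬝ᵥ (A l).mulVec (α i)) * (star (β j) ⬝ᵥ (B l).mulVec (β i))) := by
    intro i j
    rw [hHdec, Matrix.sum_mulVec, dotProduct_sum]
    refine Finset.sum_congr rfl fun l _ => ?_
    simp only [v]
    rw [Matrix.smul_mulVec, dotProduct_smul, kron_mulVec_tensor, tensor_dot, smul_eq_mul]
  have ht1 : (ketbra ψ * H).trace = ∑ i, ∑ j,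
      ((Real.sqrt (lam i * lam j) : ℝ) : ℂ) * (star (v j) ⬝ᵥ H.mulVec (v i)) := by
    rw [trace_ketbra_mul, hψ, Matrix.mulVec_sum, dotProduct_sum]
    refine Finset.sum_congr rfl fun i _ => ?_
    rw [star_sum, sum_dotProduct]
    refine Finset.sum_congr rfl fun j _ => ?_
    rw [star_smul, smul_dotProduct, Matrix.mulVec_smul, dotProduct_smul,
      Real.sqrt_mul (hlam i)]
    simp only [smul_eq_mul, Complex.star_def, Complex.conj_ofReal, Complex.ofReal_mul, v]
    ring
  have ht2 : ((∑ k, (lam k : ℂ) • ketbra (v k)) * H).trace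
      = ∑ i, (lam i : ℂ) * (star (v i) ⬝ᵥ H.mulVec (v i)) := by
    rw [Finset.sum_mul, Matrix.trace_sum]
    refine Finset.sum_congr rfl fun i _ => ?_
    rw [Matrix.smul_mul, Matrix.trace_smul, trace_ketbra_mul, smul_eq_mul]
  have ht : (ketbra ψ * H).trace - ((∑ k, (lam k : ℂ) • ketbra (v k)) * H).trace
      = ∑ i, ∑ j, ∑ l, if i = j then 0 else
            ((Real.sqrt (lam i * lam j) : ℝ) : ℂ) * ((s l : ℝ) : ℂ) *
              (star (α j) ⬝ᵥ (A l).mulVec (α i)) * (star (β j) ⬝ᵥ (B l).mulVec (β i)) := by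
    rw [ht1, ht2, ← Finset.sum_sub_distrib]
    refine Finset.sum_congr rfl fun i _ => ?_
    have hd : (lam i : ℂ) * (star (v i) ⬝ᵥ H.mulVec (v i)) = ∑ j, if i = j then
        ((Real.sqrt (lam i * lam j) : ℝ) : ℂ) * (star (v j) ⬝ᵥ H.mulVec (v i)) else 0 := by
      simp [Real.sqrt_mul_self (hlam i)]
    rw [hd, ← Finset.sum_sub_distrib]
    refine Finset.sum_congr rfl fun j _ => ?_
    split_ifs with h
    · simp
    · rw [sub_zero, hE, Finset.mul_sum]
      refine Finset.sum_congr rfl fun l _ => ?_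
      ring
  rw [← ht]
  unfold ergotropy
  rw [hinf1, hinf2, hpin, Complex.sub_re]
  ring
end

section
/- Let n ≤ m, let (α_k)_{k∈Fin n} be an orthonormal basis of ℂ^n, (β_k)_{k∈Fin n} an orthonormal family in ℂ^m, λ : Fin n → ℝ with λ_k ≥ 0, and ψ := ∑_k √λ_k (α_k ⊗ β_k). Let H := A ⊗ I_m + I_n ⊗ B with A an n×n and B an m×m Hermitian matrix, and let Π be the measurement channel with projectors P_k := |α_k⟩⟨α_k|. Then the energy is unchanged by the measurement: ⟨ψ, H ψ⟩ = Tr(Π(|ψ⟩⟨ψ|) H). -/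
open scoped BigOperators ComplexOrder
open Matrix Kronecker

theorem kron_mulVec_vecTensor {n m : ℕ} (M : Matrix (Fin n) (Fin n) ℂ)
    (N : Matrix (Fin m) (Fin m) ℂ) (u : Fin n → ℂ) (v : Fin m → ℂ) :
    (M ⊗ₖ N).mulVec (vecTensor u v) = vecTensor (M.mulVec u) (N.mulVec v) := by
  ext ⟨i, j⟩
  simp only [Matrix.mulVec, dotProduct, vecTensor, Matrix.kroneckerMap_apply,
    Fintype.sum_prod_type, Finset.sum_mul_sum]
  refine Finset.sum_congr rfl fun x _ => Finset.sum_congr rfl fun y _ => ?_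
  ring

theorem vecTensor_dot {n m : ℕ} (u u' : Fin n → ℂ) (v v' : Fin m → ℂ) :
    star (vecTensor u v) ⬝ᵥ vecTensor u' v' = (star u ⬝ᵥ u') * (star v ⬝ᵥ v') := by
  simp only [dotProduct, vecTensor, Pi.star_apply, star_mul',
    Fintype.sum_prod_type, Finset.sum_mul_sum]
  refine Finset.sum_congr rfl fun x _ => Finset.sum_congr rfl fun y _ => ?_
  ring

theorem conj_ketbra {ι : Type*} [Fintype ι] (u : ι → ℂ) (Q : Matrix ι ι ℂ)
    (hQ : Q.IsHermitian) : Q * ketbra u * Q = ketbra (Q.mulVec u) := by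
  rw [ketbra, ketbra, Matrix.mul_vecMulVec, Matrix.vecMulVec_mul, Matrix.star_mulVec, hQ.eq]

/-- for a pure Schmidt state and a non-interacting Hamiltonian,
the energy is unchanged by the measurement. -/
theorem energy_invariant_pure_noninteracting {n m : ℕ} (hnm : n ≤ m)
    (α : Fin n → Fin n → ℂ) (β : Fin n → Fin m → ℂ)
    (hα : ∀ k l, star (α k) ⬝ᵥ α l = if k = l then 1 else 0)
    (hβ : ∀ k l, star (β k) ⬝ᵥ β l = if k = l then 1 else 0)
    (lam : Fin n → ℝ) (hlam : ∀ k, 0 ≤ lam k)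
    (ψ : Fin n × Fin m → ℂ)
    (hψ : ψ = ∑ k, ((Real.sqrt (lam k) : ℝ) : ℂ) • vecTensor (α k) (β k))
    {A : Matrix (Fin n) (Fin n) ℂ} {B : Matrix (Fin m) (Fin m) ℂ}
    (hA : A.IsHermitian) (hB : B.IsHermitian)
    (H : Matrix (Fin n × Fin m) (Fin n × Fin m) ℂ)
    (hHdef : H = A ⊗ₖ (1 : Matrix (Fin m) (Fin m) ℂ)
        + (1 : Matrix (Fin n) (Fin n) ℂ) ⊗ₖ B) :
    star ψ ⬝ᵥ H.mulVec ψ = (pinch (fun k => ketbra (α k)) (ketbra ψ) * H).trace := by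
  have hQψ : ∀ k, (ketbra (α k) ⊗ₖ (1 : Matrix (Fin m) (Fin m) ℂ)).mulVec ψ
      = ((Real.sqrt (lam k) : ℝ) : ℂ) • vecTensor (α k) (β k) := by
    intro k
    rw [hψ, Matrix.mulVec_sum, Finset.sum_eq_single k]
    · rw [Matrix.mulVec_smul, kron_mulVec_vecTensor, ketbra, Matrix.vecMulVec_mulVec, hα]
      simp
    · intro l _ hl
      rw [Matrix.mulVec_smul, kron_mulVec_vecTensor, ketbra, Matrix.vecMulVec_mulVec, hα,
        if_neg (Ne.symm hl)]
      ext p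
      simp [vecTensor]
    · simp
  have hQ : ∀ k, (ketbra (α k) ⊗ₖ (1 : Matrix (Fin m) (Fin m) ℂ)).IsHermitian := by
    intro k
    rw [Matrix.IsHermitian, Matrix.conjTranspose_kronecker, ketbra,
      Matrix.conjTranspose_vecMulVec]
    simp
  have hoff : ∀ k l, k ≠ l →
      star (vecTensor (α k) (β k)) ⬝ᵥ H.mulVec (vecTensor (α l) (β l)) = 0 := by
    intro k l hkl
    rw [hHdef, Matrix.add_mulVec, dotProduct_add, kron_mulVec_vecTensor, kron_mulVec_vecTensor,
      vecTensor_dot, vecTensor_dot, Matrix.one_mulVec, Matrix.one_mulVec, hα, hβ, if_neg hkl]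
    simp
  rw [pinch, Finset.sum_mul, Matrix.trace_sum]
  simp only [conj_ketbra _ _ (hQ _), trace_ketbra_mul, hQψ]
  rw [hψ, star_sum, sum_dotProduct]
  refine Finset.sum_congr rfl fun k _ => ?_
  rw [Matrix.mulVec_sum, dotProduct_sum, Finset.sum_eq_single k]
  · intro l _ hl
    rw [Matrix.mulVec_smul, star_smul, smul_dotProduct, dotProduct_smul, hoff k l (Ne.symm hl)]
    simp
  · simp
end

section
/- (Eq. (6): EMIN equals the change in ergotropic gap) Let H := A ⊗ I_m + I_n ⊗ B with A an n×n and B an m×m Hermitian matrix, let ρ be an nm×nm density matrix, and let (P_k) be a family of pairwise-orthogonal n×n orthogonal projections summing to I_n such that ∑_k P_k ρ_a P_k = ρ_a, where ρ_a is the n×n matrix with entries (ρ_a)_{i i'} = ∑_j ρ_{(i,j),(i',j)}. Let Π(ρ) := ∑_k (P_k ⊗ I_m) ρ (P_k ⊗ I_m). Then ξ(ρ,H) − ξ(Π(ρ),H) = δ(ρ) − δ(Π(ρ)), where δ(σ) := ξ(σ,H) − ξ^l(σ,H) is the ergotropic gap. -/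
open scoped BigOperators ComplexOrder
open Matrix Kronecker

lemma trace_mul_kron_one {n m : ℕ} (ρ : Matrix (Fin n × Fin m) (Fin n × Fin m) ℂ)
    (X : Matrix (Fin n) (Fin n) ℂ) :
    (ρ * (X ⊗ₖ (1 : Matrix (Fin m) (Fin m) ℂ))).trace = (marginalA ρ * X).trace := by
  simp only [Matrix.trace, Matrix.diag, Matrix.mul_apply, Fintype.sum_prod_type, marginalA,
    Matrix.of_apply, Matrix.kroneckerMap_apply, Matrix.one_apply, Finset.sum_mul]
  refine Finset.sum_congr rfl fun i _ => ?_
  rw [Finset.sum_comm]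
  refine Finset.sum_congr rfl fun i' _ => ?_
  simp

lemma trace_pinch_mul {n m : ℕ} {K : Type*} [Fintype K] (P : K → Matrix (Fin n) (Fin n) ℂ)
    (ρ Z : Matrix (Fin n × Fin m) (Fin n × Fin m) ℂ) :
    (pinch P ρ * Z).trace = ∑ k, (ρ * ((P k ⊗ₖ (1 : Matrix (Fin m) (Fin m) ℂ)) * Z *
      (P k ⊗ₖ (1 : Matrix (Fin m) (Fin m) ℂ)))).trace := by
  rw [pinch, Finset.sum_mul, Matrix.trace_sum]
  refine Finset.sum_congr rfl fun k _ => ?_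
  rw [Matrix.mul_assoc, Matrix.mul_assoc, Matrix.trace_mul_comm]
  simp only [Matrix.mul_assoc]

lemma trace_pinch_left {n m : ℕ} {K : Type*} [Fintype K] (P : K → Matrix (Fin n) (Fin n) ℂ)
    (ρ : Matrix (Fin n × Fin m) (Fin n × Fin m) ℂ)
    (hPinv : ∑ k, P k * marginalA ρ * P k = marginalA ρ) (X : Matrix (Fin n) (Fin n) ℂ) :
    (pinch P ρ * (X ⊗ₖ (1 : Matrix (Fin m) (Fin m) ℂ))).trace
      = (ρ * (X ⊗ₖ (1 : Matrix (Fin m) (Fin m) ℂ))).trace := by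
  rw [trace_pinch_mul, trace_mul_kron_one]
  conv_rhs => rw [← hPinv, Finset.sum_mul, Matrix.trace_sum]
  refine Finset.sum_congr rfl fun k _ => ?_
  rw [← Matrix.mul_kronecker_mul, ← Matrix.mul_kronecker_mul, Matrix.one_mul, Matrix.one_mul,
    trace_mul_kron_one, Matrix.mul_assoc (P k) (marginalA ρ), Matrix.mul_assoc (P k) _ X,
    Matrix.trace_mul_comm (P k)]
  simp only [Matrix.mul_assoc]

lemma trace_pinch_right {n m : ℕ} {K : Type*} [Fintype K] (P : K → Matrix (Fin n) (Fin n) ℂ)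
    (ρ : Matrix (Fin n × Fin m) (Fin n × Fin m) ℂ)
    (hPidem : ∀ k, P k * P k = P k)
    (hPsum : ∑ k, P k = (1 : Matrix (Fin n) (Fin n) ℂ)) (Y : Matrix (Fin m) (Fin m) ℂ) :
    (pinch P ρ * ((1 : Matrix (Fin n) (Fin n) ℂ) ⊗ₖ Y)).trace
      = (ρ * ((1 : Matrix (Fin n) (Fin n) ℂ) ⊗ₖ Y)).trace := by
  have hs : (∑ k, P k) ⊗ₖ Y = ∑ k, P k ⊗ₖ Y := by
    ext p q
    simp [Matrix.sum_apply, Finset.sum_mul]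
  rw [trace_pinch_mul, ← hPsum, hs, Finset.mul_sum, Matrix.trace_sum, ← hs, hPsum]
  refine Finset.sum_congr rfl fun k _ => ?_
  rw [← Matrix.mul_kronecker_mul, ← Matrix.mul_kronecker_mul, Matrix.one_mul, Matrix.mul_one,
    Matrix.mul_one, hPidem]

lemma trace_local_conj {n m : ℕ} (A : Matrix (Fin n) (Fin n) ℂ) (B : Matrix (Fin m) (Fin m) ℂ)
    (σ : Matrix (Fin n × Fin m) (Fin n × Fin m) ℂ)
    (U : Matrix.unitaryGroup (Fin n) ℂ) (V : Matrix.unitaryGroup (Fin m) ℂ) :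
    (((U : Matrix (Fin n) (Fin n) ℂ) ⊗ₖ (V : Matrix (Fin m) (Fin m) ℂ)) * σ *
        star ((U : Matrix (Fin n) (Fin n) ℂ) ⊗ₖ (V : Matrix (Fin m) (Fin m) ℂ)) *
        (A ⊗ₖ (1 : Matrix (Fin m) (Fin m) ℂ) + (1 : Matrix (Fin n) (Fin n) ℂ) ⊗ₖ B)).trace
      = (σ * ((star (U : Matrix (Fin n) (Fin n) ℂ) * A * (U : Matrix (Fin n) (Fin n) ℂ)) ⊗ₖ
          (1 : Matrix (Fin m) (Fin m) ℂ))).trace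
        + (σ * ((1 : Matrix (Fin n) (Fin n) ℂ) ⊗ₖ
          (star (V : Matrix (Fin m) (Fin m) ℂ) * B * (V : Matrix (Fin m) (Fin m) ℂ)))).trace := by
  have hU : star (U : Matrix (Fin n) (Fin n) ℂ) * U = 1 := Matrix.UnitaryGroup.star_mul_self U
  have hV : star (V : Matrix (Fin m) (Fin m) ℂ) * V = 1 := Matrix.UnitaryGroup.star_mul_self V
  have e1 : star ((U : Matrix (Fin n) (Fin n) ℂ) ⊗ₖ (V : Matrix (Fin m) (Fin m) ℂ))
      = star (U : Matrix (Fin n) (Fin n) ℂ) ⊗ₖ star (V : Matrix (Fin m) (Fin m) ℂ) := by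
    simp only [Matrix.star_eq_conjTranspose, Matrix.conjTranspose_kronecker]
  rw [Matrix.mul_assoc, Matrix.mul_assoc, Matrix.trace_mul_comm, Matrix.mul_assoc, e1,
    Matrix.mul_add, Matrix.add_mul, Matrix.mul_add, Matrix.trace_add]
  simp only [← Matrix.mul_kronecker_mul, Matrix.mul_one, hU, hV]

/-- Eq. (6) of the paper: for non-interacting Hamiltonians, EMIN equals
the change in ergotropic gap under the measurement. -/
theorem emin_eq_ergotropicGap_change {n m : ℕ}
    {A : Matrix (Fin n) (Fin n) ℂ} {B : Matrix (Fin m) (Fin m) ℂ}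
    (hA : A.IsHermitian) (hB : B.IsHermitian)
    (H : Matrix (Fin n × Fin m) (Fin n × Fin m) ℂ)
    (hHdef : H = A ⊗ₖ (1 : Matrix (Fin m) (Fin m) ℂ)
        + (1 : Matrix (Fin n) (Fin n) ℂ) ⊗ₖ B)
    {ρ : Matrix (Fin n × Fin m) (Fin n × Fin m) ℂ}
    (hρ : ρ.PosSemidef) (hρtr : ρ.trace = 1)
    {K : Type*} [Fintype K] (P : K → Matrix (Fin n) (Fin n) ℂ)
    (hPherm : ∀ k, (P k)ᴴ = P k) (hPidem : ∀ k, P k * P k = P k)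
    (hPorth : ∀ k l, k ≠ l → P k * P l = 0)
    (hPsum : ∑ k, P k = (1 : Matrix (Fin n) (Fin n) ℂ))
    (hPinv : ∑ k, P k * marginalA ρ * P k = marginalA ρ) :
    ergotropy ρ H - ergotropy (pinch P ρ) H
      = (ergotropy ρ H - localErgotropy ρ H)
        - (ergotropy (pinch P ρ) H - localErgotropy (pinch P ρ) H) := by
  have key : localErgotropy (pinch P ρ) H = localErgotropy ρ H := by
    unfold localErgotropy
    subst hHdef
    simp only [trace_local_conj, trace_pinch_left P ρ hPinv, trace_pinch_right P ρ hPidem hPsum]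
    simp only [Matrix.mul_add, Matrix.trace_add, trace_pinch_left P ρ hPinv,
      trace_pinch_right P ρ hPidem hPsum]
  rw [key]
  ring
end

section
/- Let H be an N×N Hermitian matrix and let ρ, σ be N×N density matrices. Then ξ(ρ,H) − ξ(σ,H) = Tr((ρ − σ)H) + E_p(σ,H) − E_p(ρ,H). -/
open scoped BigOperators ComplexOrder
open Matrix Kronecker

theorem sort_aux {ι : Type*} [Fintype ι] (d e : ι → ℝ) :
    ∃ τ : Equiv.Perm ι, (∑ i, sortDown d i * sortUp e i = ∑ i, d (τ i) * e i) ∧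
      ∀ π : Equiv.Perm ι, ∑ i, sortDown d i * sortUp e i ≤ ∑ i, d (π i) * e i := by
  let q := (Fintype.equivFin ι).symm
  let a : Fin (Fintype.card ι) ≃ ι :=
    (Fin.revPerm.trans (Tuple.sort (d ∘ q))).trans q
  let b : Fin (Fintype.card ι) ≃ ι := (Tuple.sort (e ∘ q)).trans q
  have ha : sortDown d = d ∘ a := rfl
  have hb : sortUp e = e ∘ b := rfl
  have key : ∀ π : Equiv.Perm ι, ∑ i, d (π i) * e i
      = ∑ k, sortDown d (((b.trans π).trans a.symm) k) * sortUp e k := by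
    intro π
    rw [← Equiv.sum_comp b, ha, hb]
    simp
  have hup : ∀ f : ι → ℝ, Monotone (sortUp f) := fun f => Tuple.monotone_sort _
  have hdown : Antitone (sortDown d) := fun i j hij => hup d (Fin.rev_le_rev.2 hij)
  refine ⟨b.symm.trans a, ?_, fun π => ?_⟩
  · rw [key]
    simp
  · rw [key]
    exact (hdown.antivary (hup e)).sum_mul_le_sum_comp_perm_mul

theorem trace_diag {ι : Type*} [Fintype ι] [DecidableEq ι] (d e : ι → ℝ) (W : Matrix ι ι ℂ) :
    ((W * diagonal (RCLike.ofReal ∘ d) * star W * diagonal (RCLike.ofReal ∘ e)).trace).re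
      = ∑ i, ∑ j, Complex.normSq (W i j) * (d j * e i) := by
  rw [Matrix.trace, Complex.re_sum]
  refine Finset.sum_congr rfl fun i _ => ?_
  rw [Matrix.diag_apply, Matrix.mul_diagonal, Matrix.mul_apply, Finset.sum_mul, Complex.re_sum]
  refine Finset.sum_congr rfl fun j _ => ?_
  rw [Matrix.mul_diagonal]
  simp [Complex.normSq_apply]
  ring

theorem ds_aux {ι : Type*} [Fintype ι] [DecidableEq ι] (W : Matrix.unitaryGroup ι ℂ) :
    (Matrix.of fun i j => Complex.normSq ((W : Matrix ι ι ℂ) i j)) ∈ doublyStochastic ℝ ι := by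
  rw [mem_doublyStochastic_iff_sum]
  refine ⟨fun i j => Complex.normSq_nonneg _, fun i => ?_, fun j => ?_⟩
  · have h := congrFun (congrFun (Unitary.coe_mul_star_self W) i) i
    simp only [Matrix.mul_apply, Matrix.star_apply, Matrix.one_apply_eq] at h
    apply Complex.ofReal_injective
    rw [Complex.ofReal_one, ← h]
    simp [Complex.mul_conj]
  · have h := congrFun (congrFun (Unitary.coe_star_mul_self W) j) j
    simp only [Matrix.mul_apply, Matrix.star_apply, Matrix.one_apply_eq] at h
    apply Complex.ofReal_injective
    rw [Complex.ofReal_one, ← h]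
    simp [Complex.mul_conj, mul_comm]

theorem perm_unitary {ι : Type*} [Fintype ι] [DecidableEq ι] (τ : Equiv.Perm ι) :
    τ.permMatrix ℂ ∈ Matrix.unitaryGroup ι ℂ := by
  rw [Matrix.mem_unitaryGroup_iff, Matrix.star_eq_conjTranspose, Matrix.conjTranspose_permMatrix,
    ← Matrix.permMatrix_mul]
  simp

theorem iInf_eq {ι : Type*} [Fintype ι] [DecidableEq ι] {ρ H : Matrix ι ι ℂ}
    (hρ : ρ.IsHermitian) (hH : H.IsHermitian) :
    (⨅ V : Matrix.unitaryGroup ι ℂ,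
      (((V : Matrix ι ι ℂ) * ρ * star (V : Matrix ι ι ℂ) * H).trace).re)
      = passiveEnergy hρ hH := by
  obtain ⟨τ, h1, h2⟩ := sort_aux hρ.eigenvalues hH.eigenvalues
  have tr : ∀ V : Matrix.unitaryGroup ι ℂ,
      (((V : Matrix ι ι ℂ) * ρ * star (V : Matrix ι ι ℂ) * H).trace).re =
      ∑ i, ∑ j, Complex.normSq (((star hH.eigenvectorUnitary * V * hρ.eigenvectorUnitary :
        Matrix.unitaryGroup ι ℂ) : Matrix ι ι ℂ) i j) * (hρ.eigenvalues j * hH.eigenvalues i) := by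
    intro V
    rw [← trace_diag]
    conv_lhs => rw [hρ.spectral_theorem, hH.spectral_theorem]
    simp only [Unitary.conjStarAlgAut_apply, Submonoid.coe_mul, Unitary.coe_star, star_mul,
      star_star]
    simp only [← mul_assoc]
    rw [Matrix.trace_mul_comm]
    simp only [← mul_assoc]
  have le : ∀ V : Matrix.unitaryGroup ι ℂ, passiveEnergy hρ hH ≤
      (((V : Matrix ι ι ℂ) * ρ * star (V : Matrix ι ι ℂ) * H).trace).re := by
    intro V
    rw [tr]
    obtain ⟨w, hw, hw1, hwM⟩ := exists_eq_sum_perm_of_mem_doublyStochastic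
      (ds_aux (star hH.eigenvectorUnitary * V * hρ.eigenvectorUnitary))
    have hM : ∀ i j, Complex.normSq (((star hH.eigenvectorUnitary * V * hρ.eigenvectorUnitary :
        Matrix.unitaryGroup ι ℂ) : Matrix ι ι ℂ) i j) = ∑ π, w π * π.permMatrix ℝ i j := by
      intro i j
      have := congrFun (congrFun hwM i) j
      rw [Matrix.sum_apply] at this
      exact this.symm
    have : ∑ i, ∑ j, (∑ π, w π * π.permMatrix ℝ i j) * (hρ.eigenvalues j * hH.eigenvalues i)
        = ∑ π : Equiv.Perm ι, w π * ∑ i, hρ.eigenvalues (π i) * hH.eigenvalues i := by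
      simp only [Finset.sum_mul, Finset.mul_sum]
      rw [Finset.sum_congr rfl (fun _ _ => Finset.sum_comm)]
      rw [Finset.sum_comm]
      refine Finset.sum_congr rfl fun π _ => Finset.sum_congr rfl fun i _ => ?_
      simp [Equiv.toPEquiv_apply, PEquiv.toMatrix_apply]
    simp only [hM]
    rw [this]
    calc passiveEnergy hρ hH = ∑ π, w π * passiveEnergy hρ hH := by
          rw [← Finset.sum_mul, hw1, one_mul]
      _ ≤ _ := Finset.sum_le_sum fun π _ => mul_le_mul_of_nonneg_left (h2 π) (hw π)
  refine le_antisymm ?_ (le_ciInf le)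
  refine (ciInf_le ⟨_, Set.forall_mem_range.2 le⟩
    (hH.eigenvectorUnitary * ⟨_, perm_unitary τ⟩ * star hρ.eigenvectorUnitary)).trans ?_
  rw [tr, passiveEnergy, h1]
  have : star hH.eigenvectorUnitary * (hH.eigenvectorUnitary * ⟨_, perm_unitary τ⟩ *
      star hρ.eigenvectorUnitary) * hρ.eigenvectorUnitary =
      (⟨_, perm_unitary τ⟩ : Matrix.unitaryGroup ι ℂ) := by
    simp [← mul_assoc]
    simp [mul_assoc]
  rw [this]
  refine le_of_eq (Finset.sum_congr rfl fun i _ => ?_)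
  simp [Equiv.toPEquiv_apply, PEquiv.toMatrix_apply, apply_ite]

/-- ξ(ρ,H) − ξ(σ,H) = Tr((ρ−σ)H) + E_p(σ,H) − E_p(ρ,H). -/
theorem ergotropy_sub_eq_trace_add_passiveEnergy {ι : Type*} [Fintype ι] [DecidableEq ι]
    {H ρ σ : Matrix ι ι ℂ} (hH : H.IsHermitian)
    (hρ : ρ.PosSemidef) (hρtr : ρ.trace = 1)
    (hσ : σ.PosSemidef) (hσtr : σ.trace = 1) :
    ergotropy ρ H - ergotropy σ H
      = (((ρ - σ) * H).trace).re
        + passiveEnergy hσ.isHermitian hH - passiveEnergy hρ.isHermitian hH := by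
  rw [ergotropy, ergotropy, iInf_eq hρ.isHermitian hH, iInf_eq hσ.isHermitian hH, sub_mul,
    Matrix.trace_sub, Complex.sub_re]
  ring
end

section
/- (Pinching majorization) Let ρ be an N×N Hermitian matrix and (Q_k) a finite family of pairwise-orthogonal N×N orthogonal projections with ∑_k Q_k = I_N, and set σ := ∑_k Q_k ρ Q_k. Then the eigenvalues of σ are majorized by those of ρ: for every r with 1 ≤ r ≤ N, the sum of the r largest eigenvalues of σ (with multiplicity) is at most the sum of the r largest eigenvalues of ρ (with multiplicity), and Tr(σ) = Tr(ρ). -/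
open scoped BigOperators ComplexOrder
open Matrix Kronecker

lemma sortDown_spec {ι : Type*} [Fintype ι] (f : ι → ℝ) :
    ∃ e : Fin (Fintype.card ι) ≃ ι, (∀ i, sortDown f i = f (e i)) ∧ Antitone (sortDown f) := by
  refine ⟨(Fin.revPerm.trans (Tuple.sort (f ∘ (Fintype.equivFin ι).symm))).trans
    (Fintype.equivFin ι).symm, fun i => rfl, ?_⟩
  intro i j hij
  exact Tuple.monotone_sort (f ∘ (Fintype.equivFin ι).symm) (Fin.rev_le_rev.mpr hij)

lemma topsum_le {N : ℕ} (g c : Fin N → ℝ) (hg : Antitone g) (r : ℕ) (hr : 1 ≤ r) (hrN : r ≤ N)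
    (h0 : ∀ j, 0 ≤ c j) (h1 : ∀ j, c j ≤ 1) (hc : ∑ j, c j = r) :
    ∑ j, c j * g j ≤ ∑ i ∈ Finset.univ.filter (fun i : Fin N => (i : ℕ) < r), g i := by
  set t := g ⟨r - 1, by omega⟩ with ht
  have hcard : ∑ j : Fin N, (if (j : ℕ) < r then (1 : ℝ) else 0) = r := by
    rw [Finset.sum_boole, Fin.card_filter_val_lt, min_eq_right hrN]
  have key : ∑ j, (c j - (if (j : ℕ) < r then (1 : ℝ) else 0)) * (g j - t) ≤ 0 := by
    apply Finset.sum_nonpos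
    intro j _
    split_ifs with h
    · have : t ≤ g j := hg (Fin.le_def.mpr (by simp; omega))
      nlinarith [h1 j]
    · have : g j ≤ t := hg (Fin.le_def.mpr (by simp; omega))
      nlinarith [h0 j]
  have e1 : ∑ j, (c j - (if (j : ℕ) < r then (1 : ℝ) else 0)) * (g j - t)
      = ∑ j, c j * g j - ∑ j : Fin N, (if (j : ℕ) < r then g j else 0)
        - (∑ j, c j - ∑ j : Fin N, (if (j : ℕ) < r then (1 : ℝ) else 0)) * t := by
    rw [← Finset.sum_sub_distrib, ← Finset.sum_sub_distrib, Finset.sum_mul,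
      ← Finset.sum_sub_distrib]
    refine Finset.sum_congr rfl fun j _ => ?_
    split_ifs <;> ring
  rw [Finset.sum_filter]
  rw [e1, hc, hcard] at key
  linarith

lemma mul_conjTranspose_diag {ι : Type*} [Fintype ι] (W : Matrix ι ι ℂ) (i : ι) :
    (W * Wᴴ) i i = ((∑ j, Complex.normSq (W i j) : ℝ) : ℂ) := by
  simp [Matrix.mul_apply, Complex.mul_conj]

lemma pinch_doubly {ι : Type*} [Fintype ι] [DecidableEq ι]
    {ρ : Matrix ι ι ℂ} (hρ : ρ.IsHermitian)
    {K : Type*} [Fintype K] (Q : K → Matrix ι ι ℂ)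
    (hQherm : ∀ k, (Q k)ᴴ = Q k) (hQidem : ∀ k, Q k * Q k = Q k)
    (hQsum : ∑ k, Q k = (1 : Matrix ι ι ℂ))
    (hσ : (∑ k, Q k * ρ * Q k).IsHermitian) :
    ∃ D : ι → ι → ℝ, (∀ i j, 0 ≤ D i j) ∧ (∀ i, ∑ j, D i j = 1) ∧ (∀ j, ∑ i, D i j = 1) ∧
      ∀ i, hσ.eigenvalues i = ∑ j, D i j * hρ.eigenvalues j := by
  set U : Matrix ι ι ℂ := (hσ.eigenvectorUnitary : Matrix ι ι ℂ) with hU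
  set V : Matrix ι ι ℂ := (hρ.eigenvectorUnitary : Matrix ι ι ℂ) with hV
  have hUU : Uᴴ * U = 1 := Unitary.coe_star_mul_self hσ.eigenvectorUnitary
  have hVV : Vᴴ * V = 1 := Unitary.coe_star_mul_self hρ.eigenvectorUnitary
  have hVV' : V * Vᴴ = 1 := Unitary.coe_mul_star_self hρ.eigenvectorUnitary
  have hUU' : U * Uᴴ = 1 := Unitary.coe_mul_star_self hσ.eigenvectorUnitary
  have sσ : Uᴴ * (∑ k, Q k * ρ * Q k) * U = diagonal (RCLike.ofReal ∘ hσ.eigenvalues) := by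
    have := hσ.conjStarAlgAut_star_eigenvectorUnitary
    rwa [Unitary.conjStarAlgAut_star_apply] at this
  have sρ : ρ = V * diagonal (RCLike.ofReal ∘ hρ.eigenvalues) * Vᴴ := by
    have := hρ.spectral_theorem
    rwa [Unitary.conjStarAlgAut_apply] at this
  refine ⟨fun i j => ∑ k, Complex.normSq ((Uᴴ * Q k * V) i j), ?_, ?_, ?_, ?_⟩
  · intro i j
    exact Finset.sum_nonneg fun k _ => Complex.normSq_nonneg _
  · intro i
    rw [Finset.sum_comm]
    have h : ∑ k, (Uᴴ * Q k * V) * (Uᴴ * Q k * V)ᴴ = 1 := by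
      have : ∀ k, (Uᴴ * Q k * V) * (Uᴴ * Q k * V)ᴴ = Uᴴ * Q k * U := by
        intro k
        calc (Uᴴ * Q k * V) * (Uᴴ * Q k * V)ᴴ = Uᴴ * Q k * (V * Vᴴ) * Q k * U := by
              simp [Matrix.conjTranspose_mul, hQherm, Matrix.mul_assoc]
          _ = Uᴴ * (Q k * Q k) * U := by rw [hVV']; simp [Matrix.mul_assoc]
          _ = _ := by rw [hQidem]
      simp_rw [this]
      rw [← Finset.sum_mul, ← Finset.mul_sum, hQsum, mul_one, hUU]
    have h2 := congrFun (congrFun h i) i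
    rw [Matrix.sum_apply] at h2
    simp_rw [mul_conjTranspose_diag] at h2
    rw [Matrix.one_apply_eq] at h2
    exact_mod_cast h2
  · intro j
    rw [Finset.sum_comm]
    have h : ∑ k, (Uᴴ * Q k * V)ᴴ * (Uᴴ * Q k * V)ᴴᴴ = 1 := by
      have : ∀ k, (Uᴴ * Q k * V)ᴴ * (Uᴴ * Q k * V)ᴴᴴ = Vᴴ * Q k * V := by
        intro k
        calc (Uᴴ * Q k * V)ᴴ * (Uᴴ * Q k * V)ᴴᴴ = Vᴴ * Q k * (U * Uᴴ) * Q k * V := by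
              simp [Matrix.conjTranspose_mul, hQherm, Matrix.mul_assoc]
          _ = Vᴴ * (Q k * Q k) * V := by rw [hUU']; simp [Matrix.mul_assoc]
          _ = _ := by rw [hQidem]
      simp_rw [this]
      rw [← Finset.sum_mul, ← Finset.mul_sum, hQsum, mul_one, hVV]
    have h2 := congrFun (congrFun h j) j
    rw [Matrix.sum_apply] at h2
    simp_rw [mul_conjTranspose_diag] at h2
    rw [Matrix.one_apply_eq] at h2
    simp_rw [Matrix.conjTranspose_apply, Complex.star_def, Complex.normSq_conj] at h2
    exact_mod_cast h2
  · intro i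
    have h : ∑ k, (Uᴴ * Q k * V) * diagonal (RCLike.ofReal ∘ hρ.eigenvalues) * (Uᴴ * Q k * V)ᴴ
        = diagonal (RCLike.ofReal ∘ hσ.eigenvalues) := by
      rw [← sσ, Finset.mul_sum, Finset.sum_mul]
      refine Finset.sum_congr rfl fun k _ => ?_
      conv_rhs => rw [sρ]
      simp [Matrix.conjTranspose_mul, hQherm, Matrix.mul_assoc]
    have h2 := congrFun (congrFun h i) i
    rw [Matrix.sum_apply, Matrix.diagonal_apply_eq] at h2
    have h3 : ∀ k, ((Uᴴ * Q k * V) * diagonal (RCLike.ofReal ∘ hρ.eigenvalues) *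
        (Uᴴ * Q k * V)ᴴ : Matrix ι ι ℂ) i i =
        ((∑ j, Complex.normSq ((Uᴴ * Q k * V) i j) * hρ.eigenvalues j : ℝ) : ℂ) := by
      intro k
      generalize Uᴴ * Q k * V = W
      rw [Matrix.mul_apply]
      push_cast
      refine Finset.sum_congr rfl fun j _ => ?_
      rw [Matrix.mul_diagonal, Matrix.conjTranspose_apply, ← Complex.mul_conj]
      simp
      ring
    simp_rw [h3] at h2
    simp_rw [Finset.sum_mul]
    rw [Finset.sum_comm]
    apply Complex.ofReal_injective
    rw [Complex.ofReal_sum]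
    exact h2.symm

/-- pinching majorization: the eigenvalues of a pinched Hermitian matrix
are majorized by those of the original matrix, and the trace is preserved. -/
theorem pinching_majorization {ι : Type*} [Fintype ι] [DecidableEq ι]
    {ρ : Matrix ι ι ℂ} (hρ : ρ.IsHermitian)
    {K : Type*} [Fintype K] (Q : K → Matrix ι ι ℂ)
    (hQherm : ∀ k, (Q k)ᴴ = Q k) (hQidem : ∀ k, Q k * Q k = Q k)
    (hQorth : ∀ k l, k ≠ l → Q k * Q l = 0)
    (hQsum : ∑ k, Q k = (1 : Matrix ι ι ℂ))
    (hσ : (∑ k, Q k * ρ * Q k).IsHermitian) :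
    (∀ r : ℕ, 1 ≤ r → r ≤ Fintype.card ι →
      ∑ i ∈ Finset.univ.filter (fun i : Fin (Fintype.card ι) => (i : ℕ) < r),
          sortDown hσ.eigenvalues i
        ≤ ∑ i ∈ Finset.univ.filter (fun i : Fin (Fintype.card ι) => (i : ℕ) < r),
            sortDown hρ.eigenvalues i)
    ∧ (∑ k, Q k * ρ * Q k).trace = ρ.trace := by
  constructor
  · intro r hr hrN
    obtain ⟨D, hD0, hDr, hDc, hD⟩ := pinch_doubly hρ Q hQherm hQidem hQsum hσ
    obtain ⟨e, he, -⟩ := sortDown_spec hσ.eigenvalues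
    obtain ⟨e', he', hanti⟩ := sortDown_spec hρ.eigenvalues
    set S := Finset.univ.filter (fun i : Fin (Fintype.card ι) => (i : ℕ) < r) with hS
    have hrow : ∀ i, sortDown hσ.eigenvalues i
        = ∑ j, D (e i) (e' j) * sortDown hρ.eigenvalues j := by
      intro i
      rw [he, hD, ← Equiv.sum_comp e']
      simp_rw [he']
    have heq : ∑ i ∈ S, sortDown hσ.eigenvalues i
        = ∑ j, (∑ i ∈ S, D (e i) (e' j)) * sortDown hρ.eigenvalues j := by
      simp_rw [hrow, Finset.sum_mul]
      exact Finset.sum_comm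
    rw [heq]
    refine topsum_le _ _ hanti r hr hrN ?_ ?_ ?_
    · exact fun j => Finset.sum_nonneg fun i _ => hD0 _ _
    · intro j
      calc ∑ i ∈ S, D (e i) (e' j) ≤ ∑ i, D (e i) (e' j) :=
            Finset.sum_le_sum_of_subset_of_nonneg (Finset.subset_univ _) fun i _ _ => hD0 _ _
        _ = 1 := by rw [Equiv.sum_comp e (fun i => D i (e' j)), hDc]
    · rw [Finset.sum_comm]
      have : ∀ i, ∑ j, D (e i) (e' j) = 1 := fun i => by
        rw [Equiv.sum_comp e' (fun j => D (e i) j), hDr]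
      simp_rw [this]
      rw [Finset.sum_const, hS, Fin.card_filter_val_lt, min_eq_right hrN]
      simp
  · rw [Matrix.trace_sum]
    have : ∀ k, (Q k * ρ * Q k).trace = (Q k * ρ).trace := fun k => by
      rw [Matrix.trace_mul_comm, ← Matrix.mul_assoc, hQidem]
    simp_rw [this]
    rw [← Matrix.trace_sum, ← Finset.sum_mul, hQsum, one_mul]
end
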